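/- Let r ∈ {2,3}, let m ∈ ℕ, and let p be a prime with p > r. If p is large enough that 1/r + (p^m − 1)/(p^{m+1} − p^m) + 1/p ≥ (log_2(r·p^{m+1}))/p, then K_1(C_r ⊕ C_{p^m} ⊕ C_p) = K_1^*(C_r ⊕ C_{p^m} ⊕ C_p) = 2 + (p^m − 1)/(p^m − p^{m−1}). -/

import Mathlib

open Finset

/-- `S(I)` is minimal zero-sum: nonempty, zero-sum, and no proper nonempty
subfamily is zero-sum. -/
def IsMinZeroSum {G : Type*} [AddCommGroup G] {ℓ : ℕ} (g : Fin ℓ → G)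
    (I : Finset (Fin ℓ)) : Prop :=
  I.Nonempty ∧ ∑ i ∈ I, g i = 0 ∧ ∀ J ⊂ I, J.Nonempty → ∑ i ∈ J, g i ≠ 0

/-- `P` is an irreducible factorization of the indexed multiset `g`: a partition
of the index set all of whose parts are minimal zero-sum. -/
def IsFactorization {G : Type*} [AddCommGroup G] {ℓ : ℕ} (g : Fin ℓ → G)
    (P : Finpartition (Finset.univ : Finset (Fin ℓ))) : Prop :=
  ∀ I ∈ P.parts, IsMinZeroSum g I

/-- `g` is a unique factorization indexed multiset (UFIM) over `G∖{0}`: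
all elements are nonzero and there is exactly one irreducible factorization. -/
def IsUFIM {G : Type*} [AddCommGroup G] {ℓ : ℕ} (g : Fin ℓ → G) : Prop :=
  (∀ i, g i ≠ 0) ∧
  ∃! P : Finpartition (Finset.univ : Finset (Fin ℓ)), IsFactorization g P

/-- The cross number `k(S) = ∑ 1/ord(g_i)`. -/
noncomputable def crossNum {G : Type*} [AddCommGroup G] {ℓ : ℕ} (g : Fin ℓ → G) : ℝ :=
  ∑ i, (1 : ℝ) / (addOrderOf (g i) : ℝ)

/-- `K₁(G)`: the maximal cross number of a UFIM over `G∖{0}`. -/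
noncomputable def K1 (G : Type*) [AddCommGroup G] : ℝ :=
  sSup {x : ℝ | ∃ (ℓ : ℕ) (g : Fin ℓ → G), IsUFIM g ∧ crossNum g = x}

/-- `N₁(G)`: the maximal length of a UFIM over `G∖{0}`. -/
noncomputable def N1 (G : Type*) [AddCommGroup G] : ℕ :=
  sSup {n : ℕ | ∃ g : Fin n → G, IsUFIM g}

/-- `K(G)`: the maximal cross number of a minimal zero-sum indexed multiset over `G∖{0}`. -/
noncomputable def Kcross (G : Type*) [AddCommGroup G] : ℝ :=
  sSup {x : ℝ | ∃ (ℓ : ℕ) (g : Fin ℓ → G), (∀ i, g i ≠ 0) ∧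
    IsMinZeroSum g Finset.univ ∧ crossNum g = x}

/-- `g` is zero-sum free: no nonempty subfamily is zero-sum. -/
def IsZeroSumFree {G : Type*} [AddCommGroup G] {ℓ : ℕ} (g : Fin ℓ → G) : Prop :=
  ∀ I : Finset (Fin ℓ), I.Nonempty → ∑ i ∈ I, g i ≠ 0

/-- The little cross number `k(G)`: the maximal cross number of a zero-sum free
indexed multiset over `G∖{0}`. -/
noncomputable def littleCross (G : Type*) [AddCommGroup G] : ℝ :=
  sSup {x : ℝ | ∃ (ℓ : ℕ) (g : Fin ℓ → G), (∀ i, g i ≠ 0) ∧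
    IsZeroSumFree g ∧ crossNum g = x}

/-!
Unique factorization is used in the form: the zero-sum subfamilies of the given family are closed
under intersection. This property survives passing to subfamilies, replacing a subfamily by its
(nonzero) sum, and, once a zero-sum subfamily `J` has been removed, passing to the quotient by a
subgroup all of whose elements are subsums of `J`.

For the lower bound, a block `a, …, a, -(n - 1)a` of length `n` is added along each step of a
filtration of the group with cyclic quotients of order `n = p, …, p, p, r`.

For the upper bound, a subfamily may be replaced by its sum as long as the cross number does not
drop. If no further replacement is possible, then few terms have the same order `p ^ j`, `j ≥ 2`,
because enough of them would have a subsum of smaller order that could replace them. Terms of order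
`p` are counted by the polynomial method in `C_p ⊕ C_p`. There are now two cases. If some zero-sum
subfamily lies in `C_r`, then its subsums fill `C_r` (here `r ≤ 3` enters), so the rest has unique
factorization in `C_{p^m} ⊕ C_p`. Otherwise every block contains a term of order divisible by `p`.
Removing one such term from each of the `d` blocks leaves a zero-sum free family, and
`2 ^ d ≤ r * p ^ (m + 1)` since the blocks use up independent parts of the group. The removed terms
contribute at most `d / p`, which the assumption on `p` bounds.
-/

section ZeroSum

variable {ι κ G : Type*} [AddCommGroup G]

/-- The set of all sums of subfamilies of the family `g` restricted to `s`. -/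
def subsetSums (g : ι → G) (s : Finset ι) : Set G :=
  (fun A ↦ ∑ i ∈ A, g i) '' {A | A ⊆ s}

/-- The family `g` restricted to `s` is zero-sum free. -/
def ZeroSumFreeOn (g : ι → G) (s : Finset ι) : Prop :=
  ∀ A ⊆ s, A.Nonempty → ∑ i ∈ A, g i ≠ 0

/-- The version of `IsMinZeroSum` for families over an arbitrary index type. -/
def MinZeroSumOn (g : ι → G) (s : Finset ι) : Prop :=
  s.Nonempty ∧ ∑ i ∈ s, g i = 0 ∧ ∀ A ⊂ s, A.Nonempty → ∑ i ∈ A, g i ≠ 0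

/-- The intersection form of unique factorization: the zero-sum subsets of `s` are closed under
intersection. Unlike the definition by factorizations it is inherited by subsets of `s`, and `s`
itself need not be zero-sum. -/
structure UniqueFactorOn [DecidableEq ι] (g : ι → G) (s : Finset ι) : Prop where
  ne_zero : ∀ i ∈ s, g i ≠ 0
  sum_inter : ∀ A ⊆ s, ∀ B ⊆ s, ∑ i ∈ A, g i = 0 → ∑ i ∈ B, g i = 0 → ∑ i ∈ A ∩ B, g i = 0

/-- `C` is a set all of whose differences are sums of subfamilies of `g` restricted to `s`. Its size
is a multiplicative lower bound for the part of the group that `s` uses up. -/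
def IsDiffSet (g : ι → G) (s : Finset ι) (C : Finset G) : Prop :=
  ∀ c ∈ C, ∀ c' ∈ C, c - c' ∈ subsetSums g s

variable {g : ι → G} {s t J : Finset ι} {C : Finset G}

theorem ZeroSumFreeOn.mono (h : ZeroSumFreeOn g t) (hs : s ⊆ t) : ZeroSumFreeOn g s :=
  fun A hA ↦ h A (hA.trans hs)

theorem ZeroSumFreeOn.ne_zero (h : ZeroSumFreeOn g s) : ∀ i ∈ s, g i ≠ 0 :=
  fun i hi ↦ by simpa using h {i} (by simpa using hi) (singleton_nonempty i)

theorem zeroSumFreeOn_empty (g : ι → G) : ZeroSumFreeOn g ∅ :=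
  fun _ hA hne ↦ absurd (subset_empty.1 hA) hne.ne_empty

theorem exists_minZeroSumOn (hne : s.Nonempty) (h0 : ∑ i ∈ s, g i = 0) :
    ∃ P ⊆ s, MinZeroSumOn g P := by
  induction s using Finset.strongInduction with
  | H s ih =>
    by_cases h : ∃ A ⊂ s, A.Nonempty ∧ ∑ i ∈ A, g i = 0
    · obtain ⟨A, hA, hAne, hA0⟩ := h
      obtain ⟨P, hP, hmin⟩ := ih A hA hAne hA0
      exact ⟨P, hP.trans hA.subset, hmin⟩
    · push Not at h
      exact ⟨s, Subset.rfl, hne, h0, h⟩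

theorem two_le_card_of_sum_eq_zero (hne : s.Nonempty) (hg : ∀ i ∈ s, g i ≠ 0)
    (h0 : ∑ i ∈ s, g i = 0) : 2 ≤ s.card := by
  by_contra! hlt
  obtain ⟨a, rfl⟩ := card_eq_one.1 (show s.card = 1 by have := hne.card_pos; omega)
  exact hg a (mem_singleton_self a) (by simpa using h0)

theorem exists_pair_add_ne_zero (h2 : ∀ x : G, x + x = 0 → x = 0)
    (hg : ∀ i ∈ s, g i ≠ 0) (hs : 2 < s.card) :
    ∃ i ∈ s, ∃ j ∈ s, i ≠ j ∧ g i + g j ≠ 0 := by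
  obtain ⟨i, j, k, hi, hj, hk, hij, hik, hjk⟩ := two_lt_card_iff.1 hs
  by_contra! hall
  have hjk' : g j = g k := add_left_cancel ((hall i hi j hj hij).trans (hall i hi k hk hik).symm)
  exact hg k hk (h2 _ (hjk' ▸ hall j hj k hk hjk))

theorem ZeroSumFreeOn.hom {H : Type*} [AddCommGroup H] {f : G →+ H} (h : ZeroSumFreeOn g s)
    (hf : ∀ A ⊆ s, ∑ i ∈ A, f (g i) = 0 → ∑ i ∈ A, g i = 0) : ZeroSumFreeOn (fun i ↦ f (g i)) s :=
  fun A hA hne h0 ↦ h A hA hne (hf A hA h0)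

theorem finite_subsetSums (g : ι → G) (s : Finset ι) : (subsetSums g s).Finite := by
  refine Set.Finite.image _ (s.powerset.finite_toSet.subset fun A hA ↦ ?_)
  simpa using hA

theorem subsetSums_subset (K : AddSubgroup G) (hK : ∀ i ∈ s, g i ∈ K) :
    subsetSums g s ⊆ K := by
  rintro _ ⟨A, hA, rfl⟩
  exact K.sum_mem fun i hi ↦ hK i (hA hi)

theorem IsDiffSet.card_le (hC : IsDiffSet g s C) (K : AddSubgroup G) [Finite K]
    (hK : ∀ i ∈ s, g i ∈ K) : C.card ≤ Nat.card K := by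
  rcases C.eq_empty_or_nonempty with rfl | ⟨c₀, hc₀⟩
  · simp
  rw [← Set.ncard_coe_finset, ← Nat.card_coe_set_eq]
  refine Nat.card_le_card_of_injective
    (fun c : (C : Set G) ↦ (⟨c - c₀, subsetSums_subset K hK (hC c c.2 c₀ hc₀)⟩ : K))
    fun a b hab ↦ ?_
  exact Subtype.ext (sub_left_injective (congrArg Subtype.val hab))

theorem isDiffSet_singleton_zero (g : ι → G) (s : Finset ι) : IsDiffSet g s {0} := by
  simp only [IsDiffSet, mem_singleton, forall_eq, sub_zero]
  exact ⟨∅, empty_subset s, sum_empty⟩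

theorem MinZeroSumOn.eq_empty_or_eq {A : Finset ι} (h : MinZeroSumOn g s) (hA : A ⊆ s)
    (hA0 : ∑ i ∈ A, g i = 0) : A = ∅ ∨ A = s := by
  by_contra! hne
  exact h.2.2 A (hA.ssubset_of_ne hne.2) hne.1 hA0

theorem ZeroSumFreeOn.coarsen {B : κ → Finset ι} {u : Finset κ} (h : ZeroSumFreeOn g s)
    (hsub : ∀ k ∈ u, B k ⊆ s) (hd : (u : Set κ).PairwiseDisjoint B)
    (hne : ∀ k ∈ u, (B k).Nonempty) :
    ZeroSumFreeOn (fun k ↦ ∑ i ∈ B k, g i) u := by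
  classical
  rintro A hA ⟨k, hk⟩
  rw [← sum_biUnion (hd.subset hA)]
  exact h _ (biUnion_subset.2 fun k hk ↦ hsub k (hA hk))
    ((hne k (hA hk)).mono (subset_biUnion_of_mem B hk))

theorem exists_monotone_card_eq (Q : Finset ι) : ∃ T : ℕ → Finset ι, Monotone T ∧
    (∀ i, T i ⊆ Q) ∧ ∀ i ≤ Q.card, (T i).card = i := by
  classical
  refine ⟨fun i ↦ (Q.toList.take i).toFinset, fun i j hij x hx ↦ ?_, fun i x hx ↦ ?_,
    fun i hi ↦ ?_⟩
  · simp only [List.mem_toFinset] at hx ⊢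
    exact List.take_subset_take_left _ hij hx
  · exact mem_toList.1 (List.mem_of_mem_take (List.mem_toFinset.1 hx))
  · rw [List.toFinset_card_of_nodup (Q.nodup_toList.sublist (List.take_sublist _ _))]
    simpa using hi

theorem MinZeroSumOn.exists_isDiffSet (h : MinZeroSumOn g s) :
    ∃ C, IsDiffSet g s C ∧ C.card = s.card := by
  classical
  obtain ⟨T, hmono, hT, hcard⟩ := exists_monotone_card_eq s
  have diff {i j : ℕ} (hij : i ≤ j) :
      ∑ x ∈ T j \ T i, g x = ∑ x ∈ T j, g x - ∑ x ∈ T i, g x :=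
    eq_sub_of_add_eq (sum_sdiff (hmono hij))
  refine ⟨(range s.card).image fun i ↦ ∑ x ∈ T i, g x, ?_, ?_⟩
  · simp only [IsDiffSet, mem_image, mem_range]
    rintro _ ⟨i, -, rfl⟩ _ ⟨j, -, rfl⟩
    rcases le_total i j with hij | hij
    · refine ⟨s \ (T j \ T i), sdiff_subset, ?_⟩
      dsimp only
      rw [sum_sdiff_eq_sub (sdiff_subset.trans (hT j)), h.2.1, diff hij, zero_sub, neg_sub]
    · exact ⟨T i \ T j, sdiff_subset.trans (hT i), diff hij⟩
  · have injective {i j : ℕ} (hij : i < j) (hj : j < s.card) :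
        ∑ x ∈ T i, g x ≠ ∑ x ∈ T j, g x := fun he ↦ by
      have hc : (T j \ T i).card = j - i := by
        rw [card_sdiff_of_subset (hmono hij.le), hcard _ hj.le, hcard _ (hij.trans hj).le]
      rcases h.eq_empty_or_eq (sdiff_subset.trans (hT j))
        (by rw [diff hij.le, he, sub_self]) with h' | h' <;> simp only [h', card_empty] at hc <;>
        omega
    rw [card_image_of_injOn, card_range]
    intro i hi j hj he
    simp only [coe_range, Set.mem_Iio] at hi hj
    exact le_antisymm (not_lt.1 fun hlt ↦ injective hlt hi he.symm)
      (not_lt.1 fun hlt ↦ injective hlt hj he)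

theorem ZeroSumFreeOn.card_lt_ncard_subsetSums (h : ZeroSumFreeOn g s) :
    s.card < (subsetSums g s).ncard := by
  classical
  induction s using Finset.induction_on with
  | empty =>
    rw [card_empty, Set.ncard_pos (finite_subsetSums g ∅)]
    exact ⟨0, ∅, Subset.rfl, sum_empty⟩
  | insert a s ha ih =>
    have hss : subsetSums g s ⊂ subsetSums g (insert a s) := by
      refine LE.le.ssubset_of_ne (a := subsetSums g s)
        (Set.image_mono fun A hA ↦ Subset.trans hA (subset_insert a s)) fun he ↦ ?_
      have hmaps : Set.MapsTo (g a + ·) (subsetSums g s) (subsetSums g s) := by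
        rintro _ ⟨A, hA, rfl⟩
        rw [he]
        exact ⟨insert a A, insert_subset_insert a hA, sum_insert fun haA ↦ ha (hA haA)⟩
      obtain ⟨_, ⟨A, hA, rfl⟩, hA0⟩ := (((finite_subsetSums g s).injOn_iff_bijOn_of_mapsTo hmaps).1
        (add_right_injective (g a)).injOn).surjOn ⟨∅, empty_subset s, sum_empty⟩
      refine h (insert a A) (insert_subset_insert a hA) (insert_nonempty a A) ?_
      rw [sum_insert fun haA ↦ ha (hA haA)]
      exact hA0
    have := Set.ncard_lt_ncard hss (finite_subsetSums g _)
    have := ih (h.mono (subset_insert a s))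
    rw [card_insert_of_notMem ha]
    omega

theorem ZeroSumFreeOn.card_lt (h : ZeroSumFreeOn g s) (K : AddSubgroup G) [Finite K]
    (hK : ∀ i ∈ s, g i ∈ K) : s.card < Nat.card K :=
  h.card_lt_ncard_subsetSums.trans_le
    (Set.ncard_le_ncard (subsetSums_subset K hK) (Set.toFinite (K : Set G)))

theorem ZeroSumFreeOn.subsetSums_eq (h : ZeroSumFreeOn g s) (K : AddSubgroup G) [Finite K]
    (hK : ∀ i ∈ s, g i ∈ K) (hcard : s.card + 1 = Nat.card K) : subsetSums g s = K :=
  Set.eq_of_subset_of_ncard_le (subsetSums_subset K hK)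
    (hcard.ge.trans h.card_lt_ncard_subsetSums) (Set.toFinite (K : Set G))

variable [DecidableEq ι]

theorem sum_sdiff_eq_zero {A : Finset ι} (hA : A ⊆ s) (hs : ∑ i ∈ s, g i = 0)
    (hA0 : ∑ i ∈ A, g i = 0) : ∑ i ∈ s \ A, g i = 0 := by
  simpa [hs, hA0] using sum_sdiff (f := g) hA

theorem ZeroSumFreeOn.uniqueFactorOn (h : ZeroSumFreeOn g s) : UniqueFactorOn g s where
  ne_zero := h.ne_zero
  sum_inter A hA B _ hA0 _ := by
    obtain rfl : A = ∅ := not_nonempty_iff_eq_empty.1 fun hne ↦ h A hA hne hA0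
    simp

theorem MinZeroSumOn.uniqueFactorOn (h : MinZeroSumOn g s) (hg : ∀ i ∈ s, g i ≠ 0) :
    UniqueFactorOn g s where
  ne_zero := hg
  sum_inter A hA B hB hA0 hB0 := by
    rcases h.eq_empty_or_eq hA hA0 with rfl | rfl
    · simp
    · rwa [inter_eq_right.2 hB]

theorem UniqueFactorOn.mono (h : UniqueFactorOn g t) (hs : s ⊆ t) : UniqueFactorOn g s where
  ne_zero i hi := h.ne_zero i (hs hi)
  sum_inter A hA B hB := h.sum_inter A (hA.trans hs) B (hB.trans hs)

theorem UniqueFactorOn.sum_sdiff {A B : Finset ι} (h : UniqueFactorOn g s) (hA : A ⊆ s)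
    (hB : B ⊆ s) (hA0 : ∑ i ∈ A, g i = 0) (hB0 : ∑ i ∈ B, g i = 0) : ∑ i ∈ A \ B, g i = 0 := by
  rw [← sdiff_inter_self_left]
  exact sum_sdiff_eq_zero inter_subset_left hA0 (h.sum_inter A hA B hB hA0 hB0)

theorem UniqueFactorOn.sum_union {A B : Finset ι} (h : UniqueFactorOn g s) (hA : A ⊆ s)
    (hB : B ⊆ s) (hA0 : ∑ i ∈ A, g i = 0) (hB0 : ∑ i ∈ B, g i = 0) : ∑ i ∈ A ∪ B, g i = 0 := by
  simpa [h.sum_inter A hA B hB hA0 hB0, hA0, hB0] using sum_union_inter (s₁ := A) (s₂ := B) (f := g)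

theorem UniqueFactorOn.sum_eq_zero_of_add_eq_zero {A B : Finset ι} (h : UniqueFactorOn g t)
    (hs : s ⊆ t) (hJ : J ⊆ t) (hd : Disjoint s J) (hJ0 : ∑ i ∈ J, g i = 0) (hA : A ⊆ s)
    (hB : B ⊆ J) (h0 : ∑ i ∈ A, g i + ∑ i ∈ B, g i = 0) : ∑ i ∈ A, g i = 0 := by
  have hAJ : Disjoint A J := disjoint_of_subset_left hA hd
  have hAB : ∑ i ∈ A ∪ B, g i = 0 := by
    rw [Finset.sum_union (disjoint_of_subset_right hB hAJ), h0]
  have := h.sum_sdiff (union_subset (hA.trans hs) (hB.trans hJ)) hJ hAB hJ0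
  rwa [union_sdiff_distrib, sdiff_eq_empty_iff_subset.2 hB, union_empty,
    sdiff_eq_self_of_disjoint hAJ] at this

theorem UniqueFactorOn.insert_of_sum_eq_zero {a : ι} (h : UniqueFactorOn g t) (ha : g a ≠ 0)
    (h0 : ∑ i ∈ insert a t, g i = 0) : UniqueFactorOn g (insert a t) where
  ne_zero := by simpa using ⟨ha, h.ne_zero⟩
  sum_inter A hA B hB hA0 hB0 := by
    set S := insert a t
    have compl {X : Finset ι} (hX : X ⊆ S) (hX0 : ∑ i ∈ X, g i = 0) (haX : a ∈ X) :
        S \ X ⊆ t ∧ ∑ i ∈ S \ X, g i = 0 :=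
      ⟨by grind, sum_sdiff_eq_zero hX h0 hX0⟩
    have subset {X : Finset ι} (hX : X ⊆ S) (haX : a ∉ X) : X ⊆ t :=
      (subset_insert_iff_of_notMem haX).1 hX
    by_cases haA : a ∈ A <;> by_cases haB : a ∈ B
    · obtain ⟨hA', hA0'⟩ := compl hA hA0 haA
      obtain ⟨hB', hB0'⟩ := compl hB hB0 haB
      rw [show A ∩ B = S \ (S \ A ∪ S \ B) by grind]
      exact sum_sdiff_eq_zero (by grind) h0 (h.sum_union hA' hB' hA0' hB0')
    · obtain ⟨hA', hA0'⟩ := compl hA hA0 haA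
      rw [show A ∩ B = B \ (S \ A) by grind]
      exact h.sum_sdiff (subset hB haB) hA' hB0 hA0'
    · obtain ⟨hB', hB0'⟩ := compl hB hB0 haB
      rw [show A ∩ B = A \ (S \ B) by grind]
      exact h.sum_sdiff (subset hA haA) hB' hA0 hB0'
    · exact h.sum_inter A (subset hA haA) B (subset hB haB) hA0 hB0

theorem UniqueFactorOn.coarsen [DecidableEq κ] {B : κ → Finset ι} {u : Finset κ}
    (h : UniqueFactorOn g s) (hsub : ∀ k ∈ u, B k ⊆ s) (hd : (u : Set κ).PairwiseDisjoint B)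
    (hne : ∀ k ∈ u, ∑ i ∈ B k, g i ≠ 0) :
    UniqueFactorOn (fun k ↦ ∑ i ∈ B k, g i) u where
  ne_zero := hne
  sum_inter A hA A' hA' hA0 hA0' := by
    have subset {X : Finset κ} (hX : X ⊆ u) : X.biUnion B ⊆ s :=
      biUnion_subset.2 fun k hk ↦ hsub k (hX hk)
    have inter : (A ∩ A').biUnion B = A.biUnion B ∩ A'.biUnion B := by
      ext i
      simp only [mem_biUnion, mem_inter]
      refine ⟨fun ⟨k, hk, hi⟩ ↦ ⟨⟨k, hk.1, hi⟩, k, hk.2, hi⟩, fun ⟨⟨k, hk, hi⟩, k', hk', hi'⟩ ↦ ?_⟩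
      obtain rfl : k = k' :=
        hd.elim (hA hk) (hA' hk') (not_disjoint_iff.2 ⟨i, hi, hi'⟩)
      exact ⟨k, ⟨hk, hk'⟩, hi⟩
    rw [← sum_biUnion (hd.subset hA)] at hA0
    rw [← sum_biUnion (hd.subset hA')] at hA0'
    rw [← sum_biUnion (hd.subset (inter_subset_left.trans hA)), inter]
    exact h.sum_inter _ (subset hA) _ (subset hA') hA0 hA0'

section Merge

variable {j : ι}

/-- The blocks of the partition of `s` that merges the subset `J` into its element `j`. -/
def mergeBlock (J : Finset ι) (j i : ι) : Finset ι := if i = j then J else {i}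

theorem sum_mergeBlock (g : ι → G) (J : Finset ι) (j : ι) :
    (fun k ↦ ∑ i ∈ mergeBlock J j k, g i) = Function.update g j (∑ i ∈ J, g i) := by
  funext k
  by_cases hk : k = j
  · subst hk; simp [mergeBlock]
  · simp [mergeBlock, hk]

theorem mergeBlock_subset (hJ : J ⊆ s) : ∀ k ∈ insert j (s \ J), mergeBlock J j k ⊆ s := by
  unfold mergeBlock
  grind

theorem pairwiseDisjoint_mergeBlock :
    ((insert j (s \ J) : Finset ι) : Set ι).PairwiseDisjoint (mergeBlock J j) := by
  intro k hk k' hk' hne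
  simp only [Function.onFun, disjoint_left, mergeBlock]
  grind

theorem UniqueFactorOn.merge (h : UniqueFactorOn g s) (hJ : J ⊆ s) (hJ0 : ∑ i ∈ J, g i ≠ 0) :
    UniqueFactorOn (Function.update g j (∑ i ∈ J, g i)) (insert j (s \ J)) := by
  rw [← sum_mergeBlock]
  refine h.coarsen (mergeBlock_subset hJ) pairwiseDisjoint_mergeBlock fun k hk ↦ ?_
  by_cases hkj : k = j
  · simpa [mergeBlock, hkj] using hJ0
  · simpa [mergeBlock, hkj] using h.ne_zero k (by grind)

theorem ZeroSumFreeOn.merge (h : ZeroSumFreeOn g s) (hJ : J ⊆ s) (hj : j ∈ J) :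
    ZeroSumFreeOn (Function.update g j (∑ i ∈ J, g i)) (insert j (s \ J)) := by
  rw [← sum_mergeBlock]
  refine h.coarsen (mergeBlock_subset hJ) pairwiseDisjoint_mergeBlock fun k _ ↦ ?_
  unfold mergeBlock
  split_ifs
  exacts [⟨j, hj⟩, singleton_nonempty k]

theorem sum_merge {G M : Type*} [AddCommMonoid M] (g : ι → G) (w : G → M) (x : G) (hj : j ∈ J) :
    ∑ i ∈ insert j (s \ J), w (Function.update g j x i) = w x + ∑ i ∈ s \ J, w (g i) := by
  rw [sum_insert (by simp [hj]), Function.update_self]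
  congr 1
  refine sum_congr rfl fun i hi ↦ ?_
  rw [Function.update_of_ne]
  rintro rfl
  exact (mem_sdiff.1 hi).2 hj

theorem sum_merge_eq_sum (g : ι → G) (hJ : J ⊆ s) (hj : j ∈ J) :
    ∑ i ∈ insert j (s \ J), Function.update g j (∑ i ∈ J, g i) i = ∑ i ∈ s, g i := by
  rw [← sum_sdiff hJ, add_comm]
  exact sum_merge g id _ hj

theorem card_merge_add_card (hJ : J ⊆ s) (hj : j ∈ J) :
    (insert j (s \ J)).card + J.card = s.card + 1 := by
  rw [card_insert_of_notMem (by simp [hj])]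
  have := card_sdiff_add_card_eq_card hJ
  omega

end Merge

theorem UniqueFactorOn.map {u : Finset κ} [DecidableEq κ] {e : κ ↪ ι}
    (h : UniqueFactorOn (g ∘ e) u) : UniqueFactorOn g (u.map e) where
  ne_zero := by simpa using h.ne_zero
  sum_inter A hA B hB hA0 hB0 := by
    obtain ⟨A, hAu, rfl⟩ := subset_map_iff.1 hA
    obtain ⟨B, hBu, rfl⟩ := subset_map_iff.1 hB
    rw [sum_map] at hA0 hB0
    rw [← map_inter, sum_map]
    exact h.sum_inter A hAu B hBu hA0 hB0

theorem UniqueFactorOn.comp_equiv [Fintype ι] [Fintype κ] [DecidableEq κ]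
    (h : UniqueFactorOn g univ) (e : κ ≃ ι) : UniqueFactorOn (g ∘ e) univ := by
  rw [← map_univ_equiv e.symm]
  exact UniqueFactorOn.map (by simpa [Function.comp_def] using h)

theorem UniqueFactorOn.exists_completion (h : UniqueFactorOn g s) (hs : ∑ i ∈ s, g i ≠ 0) :
    ∃ (g' : Option ι → G) (s' : Finset (Option ι)), UniqueFactorOn g' s' ∧ ∑ i ∈ s', g' i = 0 ∧
      s'.card = s.card + 1 ∧ ∀ K : AddSubgroup G, (∀ i ∈ s, g i ∈ K) → ∀ i ∈ s', g' i ∈ K := by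
  let g' : Option ι → G := fun o ↦ o.elim (-∑ i ∈ s, g i) g
  have hnone : none ∉ s.map Function.Embedding.some := by simp
  have hsum : ∑ i ∈ insert none (s.map Function.Embedding.some), g' i = 0 := by
    rw [sum_insert hnone, sum_map]
    exact neg_add_cancel _
  have hmap : UniqueFactorOn g' (s.map Function.Embedding.some) := UniqueFactorOn.map (u := s) h
  refine ⟨g', _, hmap.insert_of_sum_eq_zero (a := none) (neg_ne_zero.2 hs) hsum, hsum,
    by rw [card_insert_of_notMem hnone, card_map], fun K hK ↦ ?_⟩
  simpa [g'] using ⟨K.sum_mem hK, hK⟩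

section DiffSet

theorem IsDiffSet.prod (h : UniqueFactorOn g t) (hs : s ⊆ t) (hJ : J ⊆ t) (hd : Disjoint s J)
    (hJ0 : ∑ i ∈ J, g i = 0) {C C' : Finset G} (hC : IsDiffSet g s C) (hC' : IsDiffSet g J C') :
    ∃ D : Finset G, IsDiffSet g (s ∪ J) D ∧ D.card = C.card * C'.card := by
  classical
  refine ⟨(C ×ˢ C').image fun x ↦ x.1 + x.2, ?_, ?_⟩
  · simp only [IsDiffSet, mem_image, mem_product, Prod.exists]
    rintro _ ⟨a, b, ⟨ha, hb⟩, rfl⟩ _ ⟨a', b', ⟨ha', hb'⟩, rfl⟩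
    obtain ⟨A, hA, eA⟩ := hC a ha a' ha'
    obtain ⟨B, hB, eB⟩ := hC' b hb b' hb'
    refine ⟨A ∪ B, union_subset_union hA hB, ?_⟩
    dsimp only at eA eB ⊢
    rw [sum_union (disjoint_of_subset_left hA (disjoint_of_subset_right hB hd)), eA, eB,
      add_sub_add_comm]
  · rw [card_image_of_injOn, card_product]
    rintro ⟨a, b⟩ hab ⟨a', b'⟩ hab' (he : a + b = a' + b')
    simp only [coe_product, Set.mem_prod, mem_coe] at hab hab'
    obtain ⟨A, hA, eA : ∑ i ∈ A, g i = a - a'⟩ := hC a hab.1 a' hab'.1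
    obtain ⟨B, hB, eB : ∑ i ∈ B, g i = b - b'⟩ := hC' b hab.2 b' hab'.2
    have ha : ∑ i ∈ A, g i = 0 := h.sum_eq_zero_of_add_eq_zero hs hJ hd hJ0 hA hB
      (by rw [eA, eB, ← add_sub_add_comm, he, sub_self])
    obtain rfl : a = a' := sub_eq_zero.1 (eA ▸ ha)
    rw [add_left_cancel he]

theorem UniqueFactorOn.exists_isDiffSet (h : UniqueFactorOn g s) (h0 : ∑ i ∈ s, g i = 0) :
    ∃ C, IsDiffSet g s C ∧ s.card ≤ C.card := by
  induction s using Finset.strongInduction with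
  | H s ih =>
    rcases s.eq_empty_or_nonempty with rfl | hne
    · exact ⟨{0}, isDiffSet_singleton_zero g ∅, by simp⟩
    obtain ⟨P, hP, hmin⟩ := exists_minZeroSumOn hne h0
    obtain ⟨C, hC, hCcard⟩ := hmin.exists_isDiffSet
    have hR0 := sum_sdiff_eq_zero hP h0 hmin.2.1
    rcases (s \ P).eq_empty_or_nonempty with hR | hR
    · obtain rfl : P = s := hP.antisymm (sdiff_eq_empty_iff_subset.1 hR)
      exact ⟨C, hC, hCcard.ge⟩
    obtain ⟨C', hC', hCcard'⟩ :=
      ih (s \ P) (sdiff_ssubset hP hmin.1) (h.mono sdiff_subset) hR0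
    obtain ⟨D, hD, hDcard⟩ := hC.prod h hP sdiff_subset disjoint_sdiff hR0 hC'
    rw [union_sdiff_of_subset hP] at hD
    refine ⟨D, hD, ?_⟩
    have hP2 := two_le_card_of_sum_eq_zero hmin.1 (h.mono hP).ne_zero hmin.2.1
    have hR2 := two_le_card_of_sum_eq_zero hR (h.mono sdiff_subset).ne_zero hR0
    calc s.card = P.card + (s \ P).card := by rw [add_comm, card_sdiff_add_card_eq_card hP]
      _ ≤ P.card * (s \ P).card := Nat.add_le_mul hP2 hR2
      _ ≤ D.card := by rw [hDcard, hCcard]; exact Nat.mul_le_mul_left _ hCcard'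

theorem UniqueFactorOn.card_le (h : UniqueFactorOn g s) (K : AddSubgroup G) [Finite K]
    (hK : ∀ i ∈ s, g i ∈ K) : s.card ≤ Nat.card K := by
  by_cases h0 : ∑ i ∈ s, g i = 0
  · obtain ⟨C, hC, hCcard⟩ := h.exists_isDiffSet h0
    exact hCcard.trans (hC.card_le K hK)
  · obtain ⟨g', s', h', h0', hcard, hK'⟩ := h.exists_completion h0
    obtain ⟨C, hC, hCcard⟩ := h'.exists_isDiffSet h0'
    have := hC.card_le K (hK' K hK)
    omega

theorem UniqueFactorOn.exists_transversal {Q : ι → Prop} (h : UniqueFactorOn g s)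
    (h0 : ∑ i ∈ s, g i = 0) (hQ : ∀ P ⊆ s, MinZeroSumOn g P → ∃ d ∈ P, Q d) :
    ∃ D ⊆ s, (∀ d ∈ D, Q d) ∧ ZeroSumFreeOn g (s \ D) ∧
      ∃ C, IsDiffSet g s C ∧ 2 ^ D.card ≤ C.card := by
  induction s using Finset.strongInduction with
  | H s ih =>
    rcases s.eq_empty_or_nonempty with rfl | hne
    · exact ⟨∅, Subset.rfl, by simp, zeroSumFreeOn_empty g, {0}, isDiffSet_singleton_zero g ∅,
        by simp⟩
    obtain ⟨P, hP, hmin⟩ := exists_minZeroSumOn hne h0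
    obtain ⟨d, hd, hQd⟩ := hQ P hP hmin
    have hR0 := sum_sdiff_eq_zero hP h0 hmin.2.1
    obtain ⟨D, hD, hDQ, hDfree, C, hC, hCcard⟩ := ih (s \ P) (sdiff_ssubset hP hmin.1)
      (h.mono sdiff_subset) hR0 fun P' hP' ↦ hQ P' (hP'.trans sdiff_subset)
    obtain ⟨C₁, hC₁, hC₁card⟩ := hmin.exists_isDiffSet
    obtain ⟨C₂, hC₂, hC₂card⟩ := hC₁.prod h hP sdiff_subset disjoint_sdiff hR0 hC
    rw [union_sdiff_of_subset hP] at hC₂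
    refine ⟨insert d D, by grind, by grind, fun A hA hAne hA0 ↦ ?_, C₂, hC₂, ?_⟩
    · have hAP : A ∩ P = ∅ := by
        have hAs : A ⊆ s := hA.trans sdiff_subset
        refine (hmin.eq_empty_or_eq inter_subset_right
          (h.sum_inter A hAs P hP hA0 hmin.2.1)).resolve_right ?_
        grind
      refine hDfree A (fun i hi ↦ ?_) hAne hA0
      have hiP : i ∉ P := fun hiP ↦ notMem_empty i (hAP ▸ mem_inter.2 ⟨hi, hiP⟩)
      have := hA hi
      simp_all
    · rw [card_insert_of_notMem (by grind), hC₂card, hC₁card, pow_succ, mul_comm]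
      exact Nat.mul_le_mul
        (two_le_card_of_sum_eq_zero hmin.1 (h.mono hP).ne_zero hmin.2.1) hCcard

end DiffSet

section Hom

variable {H : Type*} [AddCommGroup H] {f : G →+ H}

theorem UniqueFactorOn.hom (h : UniqueFactorOn g s)
    (hf : ∀ A ⊆ s, ∑ i ∈ A, f (g i) = 0 → ∑ i ∈ A, g i = 0) :
    UniqueFactorOn (fun i ↦ f (g i)) s where
  ne_zero i hi h0 := h.ne_zero i hi (by simpa using hf {i} (by simpa using hi) (by simpa using h0))
  sum_inter A hA B hB hA0 hB0 := by
    rw [← map_sum, h.sum_inter A hA B hB (hf A hA hA0) (hf B hB hB0), map_zero]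

theorem UniqueFactorOn.hom_sdiff (h : UniqueFactorOn g s) (hJ : J ⊆ s) (hJ0 : ∑ i ∈ J, g i = 0)
    (hker : (f.ker : Set G) ⊆ subsetSums g J) : UniqueFactorOn (fun i ↦ f (g i)) (s \ J) := by
  refine (h.mono sdiff_subset).hom fun A hA hA0 ↦ ?_
  rw [← map_sum] at hA0
  obtain ⟨B, hB, hBsum⟩ := hker (f.ker.neg_mem (f.mem_ker.2 hA0))
  exact h.sum_eq_zero_of_add_eq_zero sdiff_subset hJ sdiff_disjoint hJ0 hA hB
    (by simpa using congrArg (∑ i ∈ A, g i + ·) hBsum)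

theorem ZeroSumFreeOn.hom_sdiff (h : ZeroSumFreeOn g s) (hJ : J ⊆ s)
    (hker : (f.ker : Set G) ⊆ subsetSums g J) : ZeroSumFreeOn (fun i ↦ f (g i)) (s \ J) := by
  intro A hA hne hA0
  rw [← map_sum] at hA0
  obtain ⟨B, hB, hBsum⟩ := hker (f.ker.neg_mem (f.mem_ker.2 hA0))
  refine h (A ∪ B) (union_subset (hA.trans sdiff_subset) (hB.trans hJ))
    (hne.mono subset_union_left) ?_
  rw [sum_union (disjoint_of_subset_left hA (disjoint_of_subset_right hB sdiff_disjoint))]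
  simpa using congrArg (∑ i ∈ A, g i + ·) hBsum

end Hom

end ZeroSum

section PolynomialFunctions

/-- The monomial function `x ↦ x₁ ^ t₁ * x₂ ^ t₂` on `R × R`. -/
def monomialFun {R : Type*} [Monoid R] (t : ℕ × ℕ) (x : R × R) : R := x.1 ^ t.1 * x.2 ^ t.2

/-- The exponent pairs of total degree less than `d`. -/
def degLT (d : ℕ) : Finset (ℕ × ℕ) := {t ∈ range d ×ˢ range d | t.1 + t.2 < d}

/-- The polynomial functions on `R × R` of total degree less than `d`. -/
def polyFunLT (R : Type*) [CommRing R] (d : ℕ) : Submodule R (R × R → R) :=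
  Submodule.span R (monomialFun '' {t | t.1 + t.2 < d})

theorem mem_degLT {d : ℕ} {t : ℕ × ℕ} : t ∈ degLT d ↔ t.1 + t.2 < d := by
  simp only [degLT, mem_filter, mem_product, mem_range]
  omega

theorem card_degLT_add_card_degLT (n : ℕ) : (degLT n).card + (degLT (n - 1)).card = n ^ 2 := by
  have reflect : {t ∈ range n ×ˢ range n | ¬t.1 + t.2 < n}.card = (degLT (n - 1)).card := by
    refine card_nbij' (fun t ↦ (n - 1 - t.1, n - 1 - t.2)) (fun t ↦ (n - 1 - t.1, n - 1 - t.2))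
      ?_ ?_ ?_ ?_ <;> rintro ⟨i, j⟩ ht <;>
      simp only [coe_filter, mem_product, mem_range, Set.mem_ofPred_eq, mem_coe, mem_degLT,
        Prod.mk.injEq] at ht ⊢ <;> omega
  rw [← reflect, degLT, card_filter_add_card_filter_not, card_product, card_range, sq]

section CommRing

variable {R : Type*} [CommRing R] {d e : ℕ}

theorem monomialFun_mem_polyFunLT {t : ℕ × ℕ} (h : t.1 + t.2 < d) :
    monomialFun t ∈ polyFunLT R d :=
  Submodule.subset_span ⟨t, h, rfl⟩

theorem polyFunLT_mono (h : d ≤ e) : polyFunLT R d ≤ polyFunLT R e :=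
  Submodule.span_mono (Set.image_mono fun _ ht ↦ ht.trans_le h)

theorem polyFunLT_zero : polyFunLT R 0 = ⊥ := by
  simp [polyFunLT]

/-- The coefficients in the binomial expansion of `monomialFun t (y - x)`. -/
def shiftCoeff (R : Type*) [CommRing R] (t u : ℕ × ℕ) : R :=
  (-1) ^ (t.1 - u.1) * (-1) ^ (t.2 - u.2) * t.1.choose u.1 * t.2.choose u.2

theorem monomialFun_sub (t : ℕ × ℕ) (x y : R × R) :
    monomialFun t (y - x) = ∑ u ∈ range (t.1 + 1) ×ˢ range (t.2 + 1),
      shiftCoeff R t u * (monomialFun (t - u) x * monomialFun u y) := by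
  simp only [monomialFun, sub_eq_add_neg y x, Prod.fst_add, Prod.snd_add, Prod.fst_neg,
    Prod.snd_neg]
  rw [add_pow, add_pow, sum_mul_sum, ← sum_product']
  refine sum_congr rfl fun u _ ↦ ?_
  rw [neg_pow x.1, neg_pow x.2, shiftCoeff, Prod.fst_sub, Prod.snd_sub]
  ring

theorem monomialFun_sub_shift_mem (t : ℕ × ℕ) (a : R × R) :
    (fun x ↦ monomialFun t x - monomialFun t (x - a)) ∈ polyFunLT R (t.1 + t.2) := by
  have htop : t ∈ range (t.1 + 1) ×ˢ range (t.2 + 1) := by simp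
  have expand : (fun x ↦ monomialFun t x - monomialFun t (x - a)) =
      -∑ u ∈ (range (t.1 + 1) ×ˢ range (t.2 + 1)).erase t,
        (shiftCoeff R t u * monomialFun (t - u) a) • monomialFun u := by
    funext x
    rw [monomialFun_sub, ← add_sum_erase _ _ htop]
    simp [shiftCoeff, monomialFun, mul_assoc]
  rw [expand]
  refine neg_mem (Submodule.sum_mem _ fun u hu ↦ Submodule.smul_mem _ _ ?_)
  refine monomialFun_mem_polyFunLT ?_
  simp only [mem_erase, mem_product, mem_range, ne_eq, Prod.ext_iff] at hu
  omega

theorem sub_shift_mem_polyFunLT {F : R × R → R} (hF : F ∈ polyFunLT R d) (a : R × R) :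
    (fun x ↦ F x - F (x - a)) ∈ polyFunLT R (d - 1) := by
  let Δ : (R × R → R) →ₗ[R] (R × R → R) := .id - .funLeft R R (· - a)
  have hΔ : (polyFunLT R d).map Δ ≤ polyFunLT R (d - 1) := by
    refine (Submodule.map_span_le _ _ _).2 (Set.forall_mem_image.2 fun t ht ↦ ?_)
    exact polyFunLT_mono (Nat.le_sub_one_of_lt ht) (monomialFun_sub_shift_mem t a)
  exact hΔ (Submodule.mem_map_of_mem hF)

end CommRing

section Rank

variable {K X Y : Type*} [Field K]

theorem rank_mul_add_mul_le {m n : Type*} [Fintype m] [Fintype n] [Fintype Y]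
    (A : Matrix X m K) (P : Matrix m Y K) (Q : Matrix X n K) (B : Matrix n Y K) :
    (A * P + Q * B).rank ≤ Fintype.card m + Fintype.card n := by
  rw [← Matrix.fromCols_mul_fromRows, ← Fintype.card_sum]
  exact (Matrix.rank_mul_le_left _ _).trans (Matrix.rank_le_card_width _)

/-- The matrix of values of the monomials with exponents in `T` at the points `x a`. -/
def monomialMatrix (T : Finset (ℕ × ℕ)) (x : X → K × K) : Matrix X T K :=
  .of fun a t ↦ monomialFun (t : ℕ × ℕ) (x a)

theorem vecMulVec_mem_range_mulLeft {T : Finset (ℕ × ℕ)} {t : ℕ × ℕ} (ht : t ∈ T)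
    (x : X → K × K) (v : Y → K) : Matrix.vecMulVec (fun a ↦ monomialFun t (x a)) v ∈
      LinearMap.range (mulLeftLinearMap Y K (monomialMatrix T x)) := by
  classical
  refine ⟨Matrix.vecMulVec (Pi.single ⟨t, ht⟩ 1) v, ?_⟩
  rw [mulLeftLinearMap_apply, Matrix.mul_vecMulVec, Matrix.mulVec_single_one]
  rfl

theorem vecMulVec_mem_range_mulRight {T : Finset (ℕ × ℕ)} {t : ℕ × ℕ} (ht : t ∈ T)
    (v : X → K) (y : Y → K × K) : Matrix.vecMulVec v (fun b ↦ monomialFun t (y b)) ∈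
      LinearMap.range (mulRightLinearMap X K (monomialMatrix T y).transpose) := by
  classical
  refine ⟨Matrix.vecMulVec v (Pi.single ⟨t, ht⟩ 1), ?_⟩
  rw [mulRightLinearMap_apply, Matrix.vecMulVec_mul, Matrix.single_one_vecMul]
  rfl

/-- The matrix of the kernel `F (y - x)` on given points. -/
def shiftMatrix (F : K × K → K) (x : X → K × K) (y : Y → K × K) : Matrix X Y K :=
  .of fun a b ↦ F (y b - x a)

/- In each term `x^(t-u) * y^u` of the binomial expansion, the exponent of `x` lies in `degLT n` or
that of `y` lies in `degLT (n - 1)`. -/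
theorem exists_shiftMatrix_eq {n : ℕ} {F : K × K → K} (hF : F ∈ polyFunLT K (2 * n - 1))
    (x : X → K × K) (y : Y → K × K) : ∃ P Q, shiftMatrix F x y =
      monomialMatrix (degLT n) x * P + Q * (monomialMatrix (degLT (n - 1)) y).transpose := by
  let Φ : (K × K → K) →ₗ[K] Matrix X Y K :=
    { toFun := fun F ↦ shiftMatrix F x y
      map_add' := fun _ _ ↦ rfl
      map_smul' := fun _ _ ↦ rfl }
  have hΦ : (polyFunLT K (2 * n - 1)).map Φ ≤
      LinearMap.range (mulLeftLinearMap Y K (monomialMatrix (degLT n) x)) ⊔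
        LinearMap.range (mulRightLinearMap X K (monomialMatrix (degLT (n - 1)) y).transpose) := by
    refine (Submodule.map_span_le _ _ _).2 (Set.forall_mem_image.2 fun t ht ↦ ?_)
    have expand : Φ (monomialFun t) = ∑ u ∈ range (t.1 + 1) ×ˢ range (t.2 + 1), shiftCoeff K t u •
        Matrix.vecMulVec (fun a ↦ monomialFun (t - u) (x a)) (fun b ↦ monomialFun u (y b)) := by
      ext a b
      simp [Φ, shiftMatrix, monomialFun_sub, Matrix.sum_apply, Matrix.vecMulVec_apply]
    rw [expand]
    refine Submodule.sum_mem _ fun u hu ↦ Submodule.smul_mem _ _ ?_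
    simp only [mem_product, mem_range] at hu
    by_cases hx : t - u ∈ degLT n
    · exact Submodule.mem_sup_left (vecMulVec_mem_range_mulLeft hx x _)
    · have hy : u ∈ degLT (n - 1) := by
        rw [mem_degLT, Prod.fst_sub, Prod.snd_sub] at hx
        rw [Set.mem_ofPred_eq] at ht
        rw [mem_degLT]
        omega
      exact Submodule.mem_sup_right (vecMulVec_mem_range_mulRight hy _ y)
  obtain ⟨_, ⟨P, rfl⟩, _, ⟨Q, rfl⟩, h⟩ :=
    Submodule.mem_sup.1 (hΦ (Submodule.mem_map_of_mem hF))
  exact ⟨P, Q, h.symm⟩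

theorem rank_shiftMatrix_le [Fintype Y] {n : ℕ} {F : K × K → K} (hF : F ∈ polyFunLT K (2 * n - 1))
    (x : X → K × K) (y : Y → K × K) : (shiftMatrix F x y).rank ≤ n ^ 2 := by
  obtain ⟨P, Q, h⟩ := exists_shiftMatrix_eq hF x y
  rw [h, ← card_degLT_add_card_degLT n, ← Fintype.card_coe, ← Fintype.card_coe (degLT (n - 1))]
  exact rank_mul_add_mul_le (monomialMatrix (degLT n) x) P Q _

theorem rank_eq_card_of_triangular {α : Type*} [LinearOrder α] [Fintype Y] [DecidableEq Y]
    {M : Matrix Y Y K} (b : Y → α) (hM : ∀ i j, b j ≤ b i → M i j = (1 : Matrix Y Y K) i j) :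
    M.rank = Fintype.card Y := by
  have tri : M.BlockTriangular b := fun i j hij ↦ by
    rw [hM i j hij.le, Matrix.one_apply_ne (by rintro rfl; exact hij.false)]
  refine Matrix.rank_of_isUnit M ((Matrix.isUnit_iff_isUnit_det M).2 ?_)
  have hdet : M.det = 1 := by
    rw [tri.det]
    refine prod_eq_one fun a _ ↦ ?_
    have : M.toSquareBlock b a = 1 := by
      ext ⟨i, hi⟩ ⟨j, hj⟩
      rw [Matrix.toSquareBlock_def, Matrix.of_apply, hM i j (hj.trans hi.symm).le]
      simp [Matrix.one_apply]
    rw [this, Matrix.det_one]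
  exact hdet ▸ isUnit_one

end Rank

end PolynomialFunctions

section SignedSubsetCount

variable {ι G R : Type*} [AddCommGroup G] [DecidableEq G] [CommRing R]

/-- The number of subfamilies of `g` restricted to `B` with sum `h`, counted in `R` with the parity
of their length as sign. -/
def signedSubsetCount (R : Type*) [CommRing R] (g : ι → G) (B : Finset ι) (h : G) : R :=
  ∑ A ∈ B.powerset, if ∑ i ∈ A, g i = h then (-1) ^ A.card else 0

variable {g : ι → G} {B : Finset ι} {h : G}

theorem signedSubsetCount_empty :
    signedSubsetCount R g ∅ = fun h ↦ if h = 0 then 1 else 0 := by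
  funext h
  simp [signedSubsetCount, eq_comm]

theorem signedSubsetCount_insert [DecidableEq ι] {a : ι} (ha : a ∉ B) :
    signedSubsetCount R g (insert a B) =
      fun h ↦ signedSubsetCount R g B h - signedSubsetCount R g B (h - g a) := by
  funext h
  rw [signedSubsetCount, sum_powerset_insert ha, sub_eq_add_neg, signedSubsetCount,
    signedSubsetCount, ← sum_neg_distrib]
  congr 1
  refine sum_congr rfl fun A hA ↦ ?_
  have haA : a ∉ A := fun h ↦ ha (mem_powerset.1 hA h)
  simp only [card_insert_of_notMem haA, sum_insert haA, pow_succ, eq_sub_iff_add_eq']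
  split_ifs <;> simp

theorem mem_subsetSums_of_signedSubsetCount_ne_zero (hne : signedSubsetCount R g B h ≠ 0) :
    h ∈ subsetSums g B := by
  obtain ⟨A, hA, hA0⟩ := exists_ne_zero_of_sum_ne_zero hne
  exact ⟨A, mem_powerset.1 hA, by_contra fun hAh ↦ hA0 (if_neg hAh)⟩

theorem ZeroSumFreeOn.signedSubsetCount_zero (hB : ZeroSumFreeOn g B) :
    signedSubsetCount R g B 0 = 1 := by
  rw [signedSubsetCount, sum_eq_single_of_mem ∅ (empty_mem_powerset B)]
  · simp
  · exact fun A hA hne ↦ if_neg (hB A (mem_powerset.1 hA) (nonempty_iff_ne_empty.2 hne))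

theorem zero_indicator_mem_polyFunLT (p : ℕ) [Fact p.Prime] :
    (fun x : ZMod p × ZMod p ↦ if x = 0 then (1 : ZMod p) else 0) ∈
      polyFunLT (ZMod p) (2 * p - 1) := by
  have hp := (Fact.out : p.Prime).two_le
  have expand : (fun x : ZMod p × ZMod p ↦ if x = 0 then (1 : ZMod p) else 0) =
      monomialFun (0, 0) - monomialFun (p - 1, 0) - monomialFun (0, p - 1) +
        monomialFun (p - 1, p - 1) := by
    funext x
    simp only [Pi.add_apply, Pi.sub_apply, monomialFun, ZMod.pow_card_sub_one, Prod.ext_iff,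
      Prod.fst_zero, Prod.snd_zero, pow_zero]
    by_cases h₁ : x.1 = 0 <;> by_cases h₂ : x.2 = 0 <;> simp [h₁, h₂]
  rw [expand]
  refine add_mem (sub_mem (sub_mem ?_ ?_) ?_) ?_ <;>
    exact monomialFun_mem_polyFunLT (by dsimp only; omega)

theorem signedSubsetCount_mem_polyFunLT {p : ℕ} [Fact p.Prime] (g : ι → ZMod p × ZMod p)
    (B : Finset ι) :
    signedSubsetCount (ZMod p) g B ∈ polyFunLT (ZMod p) (2 * p - 1 - B.card) := by
  classical
  induction B using Finset.induction_on with
  | empty =>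
    rw [signedSubsetCount_empty, card_empty, Nat.sub_zero]
    convert zero_indicator_mem_polyFunLT p
  | insert a B ha ih =>
    rw [card_insert_of_notMem ha, ← Nat.sub_sub, signedSubsetCount_insert ha]
    exact sub_shift_mem_polyFunLT ih (g a)

end SignedSubsetCount

section ThreeBlocks

variable {ι G : Type*} [AddCommGroup G] [DecidableEq ι]

theorem UniqueFactorOn.eq_empty_and_eq_of_sum_add_eq {g : ι → G} {s P R A : Finset ι}
    {C : Finset G} {c c' : G} (h : UniqueFactorOn g s) (hP : P ⊆ s) (hR : R ⊆ s)
    (hd : Disjoint P R) (hm : MinZeroSumOn g P) (hC : IsDiffSet g R C) (hc : c ∈ C) (hc' : c' ∈ C)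
    (hA : A ⊂ P) (heq : ∑ i ∈ A, g i + c = c') : A = ∅ ∧ c = c' := by
  obtain ⟨S, hS, hSsum : ∑ i ∈ S, g i = c - c'⟩ := hC c hc c' hc'
  have hS0 : ∑ i ∈ S, g i = 0 := h.sum_eq_zero_of_add_eq_zero hR hP hd.symm hm.2.1 hS hA.subset
    (by rw [hSsum, ← heq]; abel)
  obtain rfl : c = c' := sub_eq_zero.1 (hSsum ▸ hS0)
  exact ⟨(hm.eq_empty_or_eq hA.subset (by simpa using heq)).resolve_right hA.ne, rfl⟩

theorem UniqueFactorOn.eq_and_eq_of_signedSubsetCount_ne_zero {K : Type*} [CommRing K]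
    [DecidableEq G] {g : ι → G} {s P R B S T : Finset ι} {C : Finset G} {c c' : G}
    (h : UniqueFactorOn g s) (hP : P ⊆ s) (hR : R ⊆ s) (hd : Disjoint P R) (hm : MinZeroSumOn g P)
    (hC : IsDiffSet g R C) (hc : c ∈ C) (hc' : c' ∈ C) (hB : B ⊆ P) (hS : S ⊂ P \ B) (hTS : T ⊆ S)
    (hne : signedSubsetCount K g B (∑ i ∈ T, g i + c' - (∑ i ∈ S, g i + c)) ≠ 0) :
    S = T ∧ c = c' := by
  obtain ⟨A, hA, hAsum : ∑ i ∈ A, g i = _⟩ := mem_subsetSums_of_signedSubsetCount_ne_zero hne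
  have hAST : Disjoint A (S \ T) := disjoint_of_subset_left hA
    (disjoint_of_subset_right (sdiff_subset.trans hS.subset) disjoint_sdiff)
  have hproper : A ∪ S \ T ⊂ P := by
    obtain ⟨x, hx, hxS⟩ := exists_of_ssubset hS
    exact (ssubset_iff_of_subset (by grind)).2 ⟨x, by grind⟩
  obtain ⟨hempty, rfl⟩ := h.eq_empty_and_eq_of_sum_add_eq hP hR hd hm hC hc hc' hproper (by
    rw [Finset.sum_union hAST, hAsum, sum_sdiff_eq_sub hTS]
    abel)
  exact ⟨(sdiff_eq_empty_iff_subset.1 (union_eq_empty.1 hempty).2).antisymm hTS, rfl⟩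

theorem card_mul_card_mul_card_le [Finite G] {g : ι → G} {s U V W : Finset ι}
    (h : UniqueFactorOn g s) (hU : U ⊆ s) (hV : V ⊆ s) (hW : W ⊆ s) (hUV : Disjoint U V)
    (hUW : Disjoint U W) (hVW : Disjoint V W) (hU0 : ∑ i ∈ U, g i = 0) (hV0 : ∑ i ∈ V, g i = 0)
    (hW0 : ∑ i ∈ W, g i = 0) : U.card * V.card * W.card ≤ Nat.card G := by
  obtain ⟨C₁, hC₁, hUC⟩ := (h.mono hU).exists_isDiffSet hU0
  obtain ⟨C₂, hC₂, hVC⟩ := (h.mono hV).exists_isDiffSet hV0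
  obtain ⟨C₃, hC₃, hWC⟩ := (h.mono hW).exists_isDiffSet hW0
  obtain ⟨C₄, hC₄, hcard₄⟩ := hC₁.prod h hU hV hUV hV0 hC₂
  obtain ⟨C₅, hC₅, hcard₅⟩ := hC₄.prod h (union_subset hU hV) hW
    (disjoint_union_left.2 ⟨hUW, hVW⟩) hW0 hC₃
  calc U.card * V.card * W.card ≤ C₁.card * C₂.card * C₃.card := by gcongr
    _ = C₅.card := by rw [hcard₅, hcard₄]
    _ ≤ Nat.card (⊤ : AddSubgroup G) := hC₅.card_le ⊤ fun _ _ ↦ AddSubgroup.mem_top _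
    _ = Nat.card G := AddSubgroup.card_top

/- `U` is a zero-sum subset of maximal size subject to `#U ≤ q`. -/
theorem UniqueFactorOn.exists_three_blocks {g : ι → G} {s : Finset ι} {q : ℕ}
    (h : UniqueFactorOn g s) (h0 : ∑ i ∈ s, g i = 0) (hq : 2 * q < s.card)
    (hsmall : ∀ P ⊆ s, MinZeroSumOn g P → P.card ≤ q) :
    ∃ U ⊆ s, ∃ V ⊆ s \ U, ∑ i ∈ U, g i = 0 ∧ ∑ i ∈ V, g i = 0 ∧
      2 ≤ U.card ∧ 2 ≤ V.card ∧ 2 ≤ ((s \ U) \ V).card ∧ U.card ≤ q ∧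
      q < U.card + V.card ∧ q < U.card + ((s \ U) \ V).card := by
  classical
  have two_le {X : Finset ι} (hX : X ⊆ s) (hX0 : ∑ i ∈ X, g i = 0) (hne : X.Nonempty) :
      2 ≤ X.card := two_le_card_of_sum_eq_zero hne (h.mono hX).ne_zero hX0
  obtain ⟨P, hP, hPmin⟩ := exists_minZeroSumOn (card_pos.1 (by omega)) h0
  obtain ⟨U, hU, hmax⟩ := exists_max_image
    {U ∈ s.powerset | ∑ i ∈ U, g i = 0 ∧ U.card ≤ q} card
    ⟨P, by simp [hP, hPmin.2.1, hsmall P hP hPmin]⟩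
  simp only [mem_filter, mem_powerset] at hU hmax
  obtain ⟨hUs, hU0, hUq⟩ := hU
  have hPU := hmax P ⟨hP, hPmin.2.1, hsmall P hP hPmin⟩
  have hU2 : 2 ≤ U.card := (two_le hP hPmin.2.1 hPmin.1).trans hPU
  have hsU := card_sdiff_add_card_eq_card hUs
  have hsU0 := sum_sdiff_eq_zero hUs h0 hU0
  obtain ⟨V, hV, hVmin⟩ := exists_minZeroSumOn (card_pos.1 (by omega)) hsU0
  have hVs := hV.trans sdiff_subset
  have hVq := hsmall V hVs hVmin
  have hsUV := card_sdiff_add_card_eq_card hV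
  have hWs : (s \ U) \ V ⊆ s := sdiff_subset.trans sdiff_subset
  have hW0 := sum_sdiff_eq_zero hV hsU0 hVmin.2.1
  have hW2 := two_le hWs hW0 (card_pos.1 (by omega))
  have hV2 := two_le hVs hVmin.2.1 hVmin.1
  have lt_add {X : Finset ι} (hX : X ⊆ s \ U) (hX0 : ∑ i ∈ X, g i = 0) (hX2 : 2 ≤ X.card) :
      q < U.card + X.card := by
    have hd : Disjoint U X := disjoint_of_subset_right hX disjoint_sdiff
    rw [← card_union_of_disjoint hd]
    by_contra! hle
    have := hmax (U ∪ X) ⟨union_subset hUs (hX.trans sdiff_subset),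
      by rw [Finset.sum_union hd, hU0, hX0, add_zero], hle⟩
    rw [card_union_of_disjoint hd] at this
    omega
  exact ⟨U, hUs, V, hV, hU0, hVmin.2.1, hU2, hV2, hW2, hUq, lt_add hV hVmin.2.1 hV2,
    lt_add sdiff_subset hW0 hW2⟩

theorem sq_lt_mul_mul {p a v w : ℤ} (hsum : a + v + w = 2 * p + 1) (ha : 2 ≤ a) (hap : a ≤ p)
    (hv : p < a + v) (hw : p < a + w) (hv2 : 2 ≤ v) (hw2 : 2 ≤ w) : p ^ 2 < a * v * w := by
  have expand : a * v * w =
      p ^ 2 + (a - 1) * (p - a) * p + a * ((a + v - p - 1) * (a + w - p - 1)) := by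
    obtain rfl : w = 2 * p + 1 - a - v := by linarith
    ring
  have hprod : 0 ≤ (a + v - p - 1) * (a + w - p - 1) :=
    mul_nonneg (by linarith) (by linarith)
  rcases hap.eq_or_lt with rfl | hlt
  · have : 0 < (a + v - a - 1) * (a + w - a - 1) := mul_pos (by linarith) (by linarith)
    nlinarith
  · have : 0 < (a - 1) * (p - a) * p := by
      refine mul_pos (mul_pos ?_ ?_) ?_ <;> linarith
    nlinarith

end ThreeBlocks

section RankTwo

variable {ι : Type*} {p : ℕ} [hp : Fact p.Prime] {g : ι → ZMod p × ZMod p} {s : Finset ι}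

theorem ZeroSumFreeOn.card_le_two_mul_sub_two (h : ZeroSumFreeOn g s) : s.card ≤ 2 * p - 2 := by
  by_contra! hlt
  have := hp.out.two_le
  obtain ⟨B, hB, hBcard⟩ := exists_subset_card_eq (show 2 * p - 1 ≤ s.card by omega)
  have hzero := signedSubsetCount_mem_polyFunLT g B
  rw [hBcard, Nat.sub_self, polyFunLT_zero, Submodule.mem_bot] at hzero
  exact one_ne_zero ((h.mono hB).signedSubsetCount_zero.symm.trans (congrFun hzero 0))

theorem MinZeroSumOn.card_ne_two_mul_add_one (h : MinZeroSumOn g s) : s.card ≠ 2 * p + 1 := by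
  classical
  intro hcard
  obtain ⟨a, ha⟩ := h.1
  have hfree : ZeroSumFreeOn g (s.erase a) := fun A hA ↦
    h.2.2 A (Finset.ssubset_of_subset_of_ssubset hA (erase_ssubset ha))
  have := hp.out.pos
  have := hfree.card_le_two_mul_sub_two
  rw [card_erase_of_mem ha] at this
  omega

variable [DecidableEq ι]

/- The matrix `F (x b - x a)`, where `F` is the signed subset count of `B` and the points are the
sums of one member of a chain in `P \ B` and one element of `C`, is triangular with unit diagonal,
while its rank is bounded by the low degree of `F`. -/
theorem UniqueFactorOn.card_sub_mul_card_le_sq {P R B : Finset ι} {C : Finset (ZMod p × ZMod p)}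
    {n : ℕ} (h : UniqueFactorOn g s) (hP : P ⊆ s) (hR : R ⊆ s) (hd : Disjoint P R)
    (hm : MinZeroSumOn g P) (hC : IsDiffSet g R C) (hB : B ⊆ P) (hn : 2 * p ≤ 2 * n + B.card) :
    (P.card - B.card) * C.card ≤ n ^ 2 := by
  classical
  obtain ⟨T, hmono, hT, hcard⟩ := exists_monotone_card_eq (P \ B)
  have hPB : (P \ B).card = P.card - B.card := card_sdiff_of_subset hB
  let F := signedSubsetCount (ZMod p) g B
  let x : Fin (P.card - B.card) × C → ZMod p × ZMod p := fun a ↦ ∑ i ∈ T a.1, g i + a.2.1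
  have hF : F ∈ polyFunLT (ZMod p) (2 * n - 1) :=
    polyFunLT_mono (by omega) (signedSubsetCount_mem_polyFunLT g B)
  have cardT (i : Fin (P.card - B.card)) : (T i).card = i := hcard i (by rw [hPB]; exact i.2.le)
  have proper (i : Fin (P.card - B.card)) : T i ⊂ P \ B :=
    (hT i).ssubset_of_ne fun he ↦ i.2.ne (by rw [← cardT i, he, hPB])
  have eq_of_ne_zero {a b : Fin (P.card - B.card) × C} (hle : b.1 ≤ a.1)
      (hne : F (x b - x a) ≠ 0) : a = b := by
    obtain ⟨hTeq, hc⟩ := h.eq_and_eq_of_signedSubsetCount_ne_zero hP hR hd hm hC a.2.2 b.2.2 hB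
      (proper a.1) (hmono hle) hne
    exact Prod.ext (Fin.ext (by rw [← cardT a.1, hTeq, cardT])) (Subtype.ext hc)
  have triangular : ∀ a b, b.1 ≤ a.1 → shiftMatrix F x x a b = (1 : Matrix _ _ _) a b := by
    intro a b hle
    rcases eq_or_ne a b with rfl | hab
    · obtain ⟨y, hy, -⟩ := exists_of_ssubset (proper a.1)
      have hBP : B ⊂ P :=
        (ssubset_iff_of_subset hB).2 ⟨y, (mem_sdiff.1 hy).1, (mem_sdiff.1 hy).2⟩
      have hBfree : ZeroSumFreeOn g B := fun A hA ↦
        hm.2.2 A (Finset.ssubset_of_subset_of_ssubset hA hBP)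
      simpa [shiftMatrix] using hBfree.signedSubsetCount_zero
    · rw [Matrix.one_apply_ne hab]
      exact not_not.1 fun hne ↦ hab (eq_of_ne_zero hle hne)
  have hrank := rank_shiftMatrix_le hF x x
  rw [rank_eq_card_of_triangular Prod.fst triangular] at hrank
  simpa using hrank

theorem UniqueFactorOn.card_ne_of_le_card_minZeroSumOn {P : Finset ι} (h : UniqueFactorOn g s)
    (h0 : ∑ i ∈ s, g i = 0) (hP : P ⊆ s) (hm : MinZeroSumOn g P) (hPp : p ≤ P.card) :
    s.card ≠ 2 * p + 1 := by
  rcases (s \ P).eq_empty_or_nonempty with hR | hR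
  · obtain rfl : P = s := hP.antisymm (sdiff_eq_empty_iff_subset.1 hR)
    exact hm.card_ne_two_mul_add_one
  intro hcard
  have hsum := card_sdiff_add_card_eq_card hP
  have hR0 := sum_sdiff_eq_zero hP h0 hm.2.1
  have hR2 := two_le_card_of_sum_eq_zero hR (h.mono sdiff_subset).ne_zero hR0
  obtain ⟨C, hC, hCcard⟩ := (h.mono sdiff_subset).exists_isDiffSet hR0
  obtain ⟨n, hn⟩ : ∃ n, (s \ P).card = n + 1 := ⟨(s \ P).card - 1, by omega⟩
  obtain ⟨B, hB, hBcard⟩ := exists_subset_card_eq (show 2 * p - 2 * n ≤ P.card by omega)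
  have hle := h.card_sub_mul_card_le_sq (n := n) hP sdiff_subset disjoint_sdiff hm hC hB (by omega)
  have : n * (n + 1) ≤ n ^ 2 := by
    refine le_trans (Nat.mul_le_mul ?_ ?_) hle <;> omega
  nlinarith

theorem UniqueFactorOn.card_ne_two_mul_add_one (h : UniqueFactorOn g s)
    (h0 : ∑ i ∈ s, g i = 0) : s.card ≠ 2 * p + 1 := by
  by_cases hlarge : ∃ P ⊆ s, MinZeroSumOn g P ∧ p ≤ P.card
  · obtain ⟨P, hP, hm, hPcard⟩ := hlarge
    exact h.card_ne_of_le_card_minZeroSumOn h0 hP hm hPcard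
  push Not at hlarge
  intro hcard
  obtain ⟨U, hU, V, hV, hU0, hV0, hU2, hV2, hW2, hUp, hUV, hUW⟩ :=
    h.exists_three_blocks h0 (q := p) (by omega) fun P hP hm ↦ (hlarge P hP hm).le
  have hW0 := sum_sdiff_eq_zero hV (sum_sdiff_eq_zero hU h0 hU0) hV0
  have hle := card_mul_card_mul_card_le h hU (hV.trans sdiff_subset)
    (sdiff_subset.trans sdiff_subset) (disjoint_of_subset_right hV disjoint_sdiff)
    (disjoint_of_subset_right sdiff_subset disjoint_sdiff) disjoint_sdiff hU0 hV0 hW0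
  have hsU := card_sdiff_add_card_eq_card hU
  have hsUV := card_sdiff_add_card_eq_card hV
  rw [Nat.card_prod, Nat.card_zmod, ← sq] at hle
  zify at *
  exact (sq_lt_mul_mul (by linarith) hU2 hUp hUV hUW hV2 hW2).not_ge hle

theorem eq_zero_of_add_self_eq_zero (hp2 : p ≠ 2) (x : ZMod p × ZMod p) (h : x + x = 0) :
    x = 0 := by
  have two_ne_zero : (2 : ZMod p) ≠ 0 := by
    rw [← Nat.cast_two, ne_eq, ZMod.natCast_eq_zero_iff]
    exact fun hdvd ↦ hp2 ((Nat.prime_dvd_prime_iff_eq hp.out Nat.prime_two).1 hdvd)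
  rw [← two_smul (ZMod p)] at h
  exact (smul_eq_zero_iff_right two_ne_zero).1 h

theorem UniqueFactorOn.card_le_two_mul_of_sum_eq_zero (h : UniqueFactorOn g s) (hp2 : p ≠ 2)
    (h0 : ∑ i ∈ s, g i = 0) : s.card ≤ 2 * p := by
  induction hn : s.card using Nat.strong_induction_on generalizing g s with
  | _ n ih =>
    by_contra! hlt
    have hne := h.card_ne_two_mul_add_one h0
    obtain ⟨i, hi, j, hj, hij, hsum⟩ := exists_pair_add_ne_zero (eq_zero_of_add_self_eq_zero hp2)
      h.ne_zero (show 2 < s.card by have := hp.out.pos; omega)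
    rw [← sum_pair (f := g) hij] at hsum
    have hJ : {i, j} ⊆ s := insert_subset hi (singleton_subset_iff.2 hj)
    have hmerge := h.merge (j := i) hJ hsum
    have htotal := (sum_merge_eq_sum g hJ (mem_insert_self i {j})).trans h0
    have hcard := card_merge_add_card hJ (mem_insert_self i {j})
    rw [card_pair hij] at hcard
    have := ih _ (by omega) hmerge htotal rfl
    omega

theorem UniqueFactorOn.card_le_two_mul (h : UniqueFactorOn g s) (hp2 : p ≠ 2) :
    s.card ≤ 2 * p := by
  by_cases h0 : ∑ i ∈ s, g i = 0
  · exact h.card_le_two_mul_of_sum_eq_zero hp2 h0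
  · obtain ⟨g', s', h', h0', hcard, -⟩ := h.exists_completion h0
    have := h'.card_le_two_mul_of_sum_eq_zero hp2 h0'
    omega

end RankTwo

section Merging

variable {ι G : Type*} [AddCommGroup G] {g : ι → G} {s t J : Finset ι}

/-- The contribution of a group element to the cross number. -/
noncomputable def invOrd (x : G) : ℝ := 1 / (addOrderOf x : ℝ)

theorem one_div_le_invOrd {x : G} {n : ℕ} (hn : 0 < n) (h : n • x = 0) :
    1 / (n : ℝ) ≤ invOrd x := by
  have hdvd := addOrderOf_dvd_of_nsmul_eq_zero h
  have := Nat.pos_of_dvd_of_pos hdvd hn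
  have := Nat.le_of_dvd hn hdvd
  unfold invOrd
  gcongr

theorem invOrd_le_invOrd_map {H : Type*} [AddCommGroup H] [Finite G] (f : G →+ H) (x : G) :
    invOrd x ≤ invOrd (f x) :=
  one_div_le_invOrd (addOrderOf_pos x) (by rw [← map_nsmul, addOrderOf_nsmul_eq_zero, map_zero])

/-- No nonzero subsum of at least two terms can replace its terms without decreasing the total
weight `w`. -/
def MergeReduced (w : G → ℝ) (g : ι → G) (s : Finset ι) : Prop :=
  ∀ J ⊆ s, 2 ≤ J.card → ∑ i ∈ J, g i ≠ 0 → w (∑ i ∈ J, g i) < ∑ i ∈ J, w (g i)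

theorem MergeReduced.mono {w : G → ℝ} (h : MergeReduced w g t) (hs : s ⊆ t) :
    MergeReduced w g s := fun J hJ ↦ h J (hJ.trans hs)

theorem sum_invOrd_le_invOrd_sum {q N : ℕ} (hq : 0 < q) (hN : 0 < N)
    (hord : ∀ i ∈ J, addOrderOf (g i) = q * N) (hcard : J.card ≤ q)
    (h0 : N • ∑ i ∈ J, g i = 0) : ∑ i ∈ J, invOrd (g i) ≤ invOrd (∑ i ∈ J, g i) := by
  calc ∑ i ∈ J, invOrd (g i) = J.card * (1 / ((q : ℝ) * N)) := by
        rw [sum_congr rfl fun i hi ↦ by rw [invOrd, hord i hi], sum_const, nsmul_eq_mul,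
          Nat.cast_mul]
    _ ≤ q * (1 / ((q : ℝ) * N)) := by gcongr
    _ = 1 / (N : ℝ) := by field_simp
    _ ≤ invOrd (∑ i ∈ J, g i) := one_div_le_invOrd hN h0

variable {q N : ℕ} (K : AddSubgroup G) [Finite K]

theorem MergeReduced.sum_eq_zero_of_nsmul_sum_eq_zero (h : MergeReduced invOrd g s) (hq : 1 < q)
    (hN : 0 < N) (hK : Nat.card K ≤ q) (hord : ∀ i ∈ s, addOrderOf (g i) = q * N)
    (hmem : ∀ i ∈ s, N • g i ∈ K) {A : Finset ι} (hA : A ⊆ s) (h0 : ∑ i ∈ A, N • g i = 0) :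
    ∑ i ∈ A, g i = 0 := by
  classical
  induction A using Finset.strongInduction with
  | H A ih =>
    rcases A.eq_empty_or_nonempty with rfl | hne
    · exact sum_empty
    obtain ⟨P, hPA, hP⟩ := exists_minZeroSumOn hne h0
    have hPs := hPA.trans hA
    have hg : ∀ i ∈ P, N • g i ≠ 0 := fun i hi h0 ↦ by
      have := Nat.le_of_dvd hN (hord i (hPs hi) ▸ addOrderOf_dvd_of_nsmul_eq_zero h0)
      nlinarith
    have hPcard : P.card ≤ q :=
      ((hP.uniqueFactorOn hg).card_le K fun i hi ↦ hmem i (hPs hi)).trans hK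
    have hP0 : ∑ i ∈ P, g i = 0 := by
      by_contra hP0
      refine (h P hPs (two_le_card_of_sum_eq_zero hP.1 hg hP.2.1) hP0).not_ge ?_
      exact sum_invOrd_le_invOrd_sum (by lia) hN (fun i hi ↦ hord i (hPs hi)) hPcard
        (by rw [smul_sum, hP.2.1])
    rw [← sum_sdiff hPA, hP0, add_zero]
    exact ih (A \ P) (sdiff_ssubset hPA hP.1) (sdiff_subset.trans hA)
      (sum_sdiff_eq_zero hPA h0 hP.2.1)

theorem ZeroSumFreeOn.card_lt_of_mergeReduced (h : ZeroSumFreeOn g s)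
    (hred : MergeReduced invOrd g s) (hq : 1 < q) (hN : 0 < N) (hK : Nat.card K ≤ q)
    (hord : ∀ i ∈ s, addOrderOf (g i) = q * N) (hmem : ∀ i ∈ s, N • g i ∈ K) : s.card < q :=
  ((h.hom (f := nsmulAddMonoidHom N) fun _ hA h0 ↦
    hred.sum_eq_zero_of_nsmul_sum_eq_zero K hq hN hK hord hmem hA h0).card_lt K hmem).trans_le hK

theorem exists_mergeReduced_of_merge_closed [DecidableEq ι] {Φ : (ι → G) → Finset ι → Prop}
    (w : G → ℝ)
    (hΦ : ∀ {g s J j}, Φ g s → J ⊆ s → j ∈ J → ∑ i ∈ J, g i ≠ 0 →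
      Φ (Function.update g j (∑ i ∈ J, g i)) (insert j (s \ J))) (h : Φ g s) :
    ∃ g' s', Φ g' s' ∧ MergeReduced w g' s' ∧ ∑ i ∈ s, w (g i) ≤ ∑ i ∈ s', w (g' i) := by
  induction hn : s.card using Nat.strong_induction_on generalizing g s with
  | _ n ih =>
    by_cases hred : MergeReduced w g s
    · exact ⟨g, s, h, hred, le_rfl⟩
    unfold MergeReduced at hred
    push Not at hred
    obtain ⟨J, hJ, hJ2, hJ0, hw⟩ := hred
    obtain ⟨j, hj⟩ : J.Nonempty := card_pos.1 (by lia)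
    have hcard := card_merge_add_card hJ hj
    obtain ⟨g', s', hΦ', hred', hle⟩ := ih _ (by lia) (hΦ h hJ hj hJ0) rfl
    refine ⟨g', s', hΦ', hred', le_trans ?_ hle⟩
    rw [sum_merge g w _ hj, ← sum_sdiff hJ, add_comm]
    gcongr

theorem ZeroSumFreeOn.exists_mergeReduced (w : G → ℝ) (h : ZeroSumFreeOn g s) :
    ∃ (g' : ι → G) (s' : Finset ι), ZeroSumFreeOn g' s' ∧ MergeReduced w g' s' ∧
      ∑ i ∈ s, w (g i) ≤ ∑ i ∈ s', w (g' i) := by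
  classical exact exists_mergeReduced_of_merge_closed w (fun h hJ hj _ ↦ h.merge hJ hj) h

variable [DecidableEq ι]

theorem UniqueFactorOn.exists_mergeReduced (w : G → ℝ) (h : UniqueFactorOn g s) :
    ∃ (g' : ι → G) (s' : Finset ι), UniqueFactorOn g' s' ∧ MergeReduced w g' s' ∧
      ∑ i ∈ s, w (g i) ≤ ∑ i ∈ s', w (g' i) :=
  exists_mergeReduced_of_merge_closed w (fun h hJ _ hJ0 ↦ h.merge hJ hJ0) h

theorem UniqueFactorOn.card_le_of_mergeReduced (h : UniqueFactorOn g s)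
    (hred : MergeReduced invOrd g s) (hq : 1 < q) (hN : 0 < N) (hK : Nat.card K ≤ q)
    (hord : ∀ i ∈ s, addOrderOf (g i) = q * N) (hmem : ∀ i ∈ s, N • g i ∈ K) : s.card ≤ q :=
  ((h.hom (f := nsmulAddMonoidHom N) fun _ hA h0 ↦
    hred.sum_eq_zero_of_nsmul_sum_eq_zero K hq hN hK hord hmem hA h0).card_le K hmem).trans hK

end Merging

section Lift

variable {ι G H : Type*} [AddCommGroup G] [AddCommGroup H] {f : G →+ H} {g : ι → H} {s : Finset ι}

theorem exists_map_sum_eq (hf : ∀ i ∈ s, g i ∈ f.range) :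
    ∃ g' : ι → G, ∀ A ⊆ s, f (∑ i ∈ A, g' i) = ∑ i ∈ A, g i := by
  classical
  choose! g' hg' using hf
  exact ⟨g', fun A hA ↦ by rw [map_sum]; exact sum_congr rfl fun i hi ↦ hg' i (hA hi)⟩

theorem UniqueFactorOn.exists_lift [DecidableEq ι] (h : UniqueFactorOn g s)
    (hinj : Function.Injective f) (hf : ∀ i ∈ s, g i ∈ f.range) :
    ∃ g' : ι → G, UniqueFactorOn g' s := by
  obtain ⟨g', hg'⟩ := exists_map_sum_eq hf
  have hiff : ∀ A ⊆ s, ∑ i ∈ A, g' i = 0 ↔ ∑ i ∈ A, g i = 0 := fun A hA ↦ by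
    rw [← hg' A hA, map_eq_zero_iff f hinj]
  refine ⟨g', fun i hi h0 ↦ h.ne_zero i hi ?_, fun A hA B hB hA0 hB0 ↦ ?_⟩
  · simpa [h0] using hiff {i} (singleton_subset_iff.2 hi)
  · rw [hiff _ (inter_subset_left.trans hA)]
    exact h.sum_inter A hA B hB ((hiff A hA).1 hA0) ((hiff B hB).1 hB0)

theorem ZeroSumFreeOn.exists_lift (h : ZeroSumFreeOn g s) (hf : ∀ i ∈ s, g i ∈ f.range) :
    ∃ g' : ι → G, ZeroSumFreeOn g' s := by
  obtain ⟨g', hg'⟩ := exists_map_sum_eq hf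
  exact ⟨g', fun A hA hne h0 ↦ h A hA hne (by rw [← hg' A hA, h0, map_zero])⟩

end Lift

theorem sum_Icc_div_pow (c : ℝ) (m : ℕ) {x : ℝ} (hx0 : x ≠ 0) (hx1 : x ≠ 1) :
    ∑ j ∈ Icc 1 m, c / x ^ j = c / (x - 1) * (1 - 1 / x ^ m) := by
  have := sub_ne_zero.2 hx1
  induction m with
  | zero => simp
  | succ m ih =>
    rw [sum_Icc_succ_top (by lia), ih]
    field_simp
    ring

section ZModHom

variable {G : Type*} [AddCommGroup G] {n : ℕ} {a : G}

/-- The homomorphism from `ZMod n` that maps `1` to a given element killed by `n`. -/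
def zmodHom (a : G) (ha : n • a = 0) : ZMod n →+ G :=
  ZMod.lift n ⟨zmultiplesHom G a, by simpa using ha⟩

theorem zmodHom_natCast (ha : n • a = 0) (k : ℕ) : zmodHom a ha (k : ZMod n) = k • a := by
  rw [← Int.cast_natCast, zmodHom, ZMod.lift_coe]
  simp

theorem zmodHom_injective (ha : n • a = 0) (hord : addOrderOf a = n) :
    Function.Injective (zmodHom a ha) := by
  refine (ZMod.lift_injective _).2 fun k hk ↦ ?_
  rw [ZMod.intCast_zmod_eq_zero_iff_dvd, ← hord, addOrderOf_dvd_iff_zsmul_eq_zero]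
  exact hk

end ZModHom

section PrimePower

variable {ι G : Type*} [AddCommGroup G] {p m : ℕ} [hp : Fact p.Prime] {s : Finset ι}

theorem sum_invOrd_le_of_card_level_le {g : ι → G} (hexp : ∀ i ∈ s, p ^ m • g i = 0)
    (hg : ∀ i ∈ s, g i ≠ 0) {c : ℕ → ℕ}
    (hc : ∀ j ∈ Icc 1 m, #{i ∈ s | addOrderOf (g i) = p ^ j} ≤ c j) :
    ∑ i ∈ s, invOrd (g i) ≤ ∑ j ∈ Icc 1 m, (c j : ℝ) / p ^ j := by
  have hord : ∀ i ∈ s, ∃ j ∈ Icc 1 m, addOrderOf (g i) = p ^ j := fun i hi ↦ by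
    obtain ⟨j, hj, hij⟩ :=
      (Nat.dvd_prime_pow hp.out).1 (addOrderOf_dvd_of_nsmul_eq_zero (hexp i hi))
    refine ⟨j, mem_Icc.2 ⟨Nat.one_le_iff_ne_zero.2 ?_, hj⟩, hij⟩
    rintro rfl
    exact hg i hi (AddMonoid.addOrderOf_eq_one_iff.1 hij)
  choose! e he hord using hord
  rw [← sum_fiberwise_of_maps_to he]
  refine sum_le_sum fun j hj ↦ ?_
  calc ∑ i ∈ s with e i = j, invOrd (g i) = #{i ∈ s | e i = j} / (p : ℝ) ^ j := by
        rw [sum_congr rfl (g := fun _ ↦ 1 / (p : ℝ) ^ j), sum_const, nsmul_eq_mul, mul_one_div]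
        intro i hi
        obtain ⟨his, rfl⟩ := mem_filter.1 hi
        rw [invOrd, hord i his, Nat.cast_pow]
    _ ≤ c j / (p : ℝ) ^ j := by
        gcongr
        refine (card_le_card fun i hi ↦ ?_).trans (hc j hj)
        obtain ⟨his, rfl⟩ := mem_filter.1 hi
        exact mem_filter.2 ⟨his, hord i his⟩

theorem sum_invOrd_le_of_card_level_le_two_mul (hm : 1 ≤ m) {g : ι → G}
    (hexp : ∀ i ∈ s, p ^ m • g i = 0) (hg : ∀ i ∈ s, g i ≠ 0) {c : ℕ}
    (hone : #{i ∈ s | addOrderOf (g i) = p} ≤ 2 * c)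
    (hlevel : ∀ j ≥ 2, #{i ∈ s | addOrderOf (g i) = p ^ j} ≤ c) :
    ∑ i ∈ s, invOrd (g i) ≤ c / p + ∑ j ∈ Icc 1 m, (c : ℝ) / p ^ j := by
  refine (sum_invOrd_le_of_card_level_le hexp hg
    (c := fun j ↦ (if j = 1 then c else 0) + c) fun j hj ↦ ?_).trans_eq ?_
  · rcases (mem_Icc.1 hj).1.eq_or_lt with rfl | hj2
    · rw [pow_one, if_pos rfl, ← two_mul]
      exact hone
    · rw [if_neg (by lia), zero_add]
      exact hlevel j hj2
  · have hmem : 1 ∈ Icc 1 m := left_mem_Icc.2 hm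
    simp [add_div, sum_add_distrib, ite_div, hmem]

end PrimePower

section SylowPart

variable {p m : ℕ}

theorem pow_nsmul_eq_zero (hm : 1 ≤ m) (x : ZMod (p ^ m) × ZMod p) : p ^ m • x = 0 := by
  have hdvd : p ∣ p ^ m := dvd_pow_self p (by lia)
  refine Prod.ext ?_ ?_
  · rw [Prod.smul_fst, nsmul_eq_mul, ZMod.natCast_self, zero_mul, Prod.fst_zero]
  · rw [Prod.smul_snd, nsmul_eq_mul, (ZMod.natCast_eq_zero_iff _ _).2 hdvd, zero_mul, Prod.snd_zero]

theorem nsmul_natCast_pow_pred (p : ℕ) (hm : 1 ≤ m) :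
    p • ((p ^ (m - 1) : ℕ) : ZMod (p ^ m)) = 0 := by
  rw [nsmul_eq_mul, ← Nat.cast_mul, mul_pow_sub_one (by lia), ZMod.natCast_self]

/-- The elements of order dividing `p` in the first summand. They contain `p ^ (j - 1) • x` for
every `x` of order `p ^ j` with `j ≥ 2`, because this kills the second summand. -/
def fstTorsion (p m : ℕ) : AddSubgroup (ZMod (p ^ m) × ZMod p) :=
  (nsmulAddMonoidHom p).ker.prod ⊥

theorem pow_nsmul_mem_fstTorsion {j : ℕ} {x : ZMod (p ^ m) × ZMod p}
    (hx : addOrderOf x = p ^ (j + 2)) : p ^ (j + 1) • x ∈ fstTorsion p m := by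
  have h0 : p ^ (j + 2) • x = 0 := hx ▸ addOrderOf_nsmul_eq_zero x
  refine AddSubgroup.mem_prod.2 ⟨?_, ?_⟩
  · rw [AddMonoidHom.mem_ker, nsmulAddMonoidHom_apply, Prod.smul_fst, ← mul_smul, ← pow_succ']
    exact congrArg Prod.fst h0
  · simp

/-- The embedding of `ZMod p × ZMod p` whose image consists of the elements killed by `p`. -/
def torsionHom (p : ℕ) (hm : 1 ≤ m) : ZMod p × ZMod p →+ ZMod (p ^ m) × ZMod p :=
  (zmodHom _ (nsmul_natCast_pow_pred p hm)).prodMap (.id _)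

variable [NeZero p]

theorem card_fstTorsion_le : Nat.card (fstTorsion p m) ≤ p := by
  classical
  rw [fstTorsion, Nat.card_congr (AddSubgroup.prodEquiv _ _).toEquiv, Nat.card_prod,
    AddSubgroup.card_bot, mul_one]
  have := IsAddCyclic.card_nsmul_eq_zero_le (α := ZMod (p ^ m)) (NeZero.pos p)
  rw [← Fintype.card_coe, ← Nat.card_eq_fintype_card] at this
  simpa [AddMonoidHom.mem_ker] using this

theorem torsionHom_injective (hm : 1 ≤ m) : Function.Injective (torsionHom p hm) := by
  have hpow := mul_pow_sub_one (n := m) (by lia) p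
  refine Function.Injective.prodMap (zmodHom_injective (nsmul_natCast_pow_pred p hm) ?_)
    Function.injective_id
  rw [ZMod.addOrderOf_coe _ (pow_ne_zero _ (NeZero.ne p)),
    Nat.gcd_eq_right ⟨p, by rw [mul_comm, hpow]⟩]
  exact Nat.div_eq_of_eq_mul_left (pow_pos (NeZero.pos p) _) hpow.symm

theorem mem_range_torsionHom (hm : 1 ≤ m) {x : ZMod (p ^ m) × ZMod p} (hx : p • x = 0) :
    x ∈ (torsionHom p hm).range := by
  obtain ⟨k, hk⟩ := ZMod.natCast_zmod_surjective x.1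
  have hdvd : p ^ m ∣ p * k := by
    rw [← ZMod.natCast_eq_zero_iff, Nat.cast_mul, hk, ← nsmul_eq_mul]
    exact congrArg Prod.fst hx
  rw [← mul_pow_sub_one (n := m) (by lia)] at hdvd
  obtain ⟨l, rfl⟩ := Nat.dvd_of_mul_dvd_mul_left (NeZero.pos p) hdvd
  refine ⟨(l, x.2), Prod.ext ((zmodHom_natCast (nsmul_natCast_pow_pred p hm) l).trans ?_) rfl⟩
  rw [← hk, nsmul_eq_mul, ← Nat.cast_mul, mul_comm]

end SylowPart

section SylowBound

variable {ι : Type*} {p m : ℕ} [hp : Fact p.Prime] {g : ι → ZMod (p ^ m) × ZMod p} {s : Finset ι}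

theorem UniqueFactorOn.card_le_of_nsmul_eq_zero [DecidableEq ι] (h : UniqueFactorOn g s)
    (hm : 1 ≤ m) (hp2 : p ≠ 2) (hs : ∀ i ∈ s, p • g i = 0) : s.card ≤ 2 * p := by
  obtain ⟨g', hg'⟩ :=
    h.exists_lift (torsionHom_injective hm) fun i hi ↦ mem_range_torsionHom hm (hs i hi)
  exact hg'.card_le_two_mul hp2

theorem ZeroSumFreeOn.card_le_of_nsmul_eq_zero (h : ZeroSumFreeOn g s)
    (hm : 1 ≤ m) (hs : ∀ i ∈ s, p • g i = 0) : s.card ≤ 2 * (p - 1) := by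
  obtain ⟨g', hg'⟩ := h.exists_lift fun i hi ↦ mem_range_torsionHom hm (hs i hi)
  have := hg'.card_le_two_mul_sub_two
  lia

theorem UniqueFactorOn.sum_invOrd_le_of_prime_power [DecidableEq ι] (h : UniqueFactorOn g s)
    (hm : 1 ≤ m) (hp2 : p ≠ 2) :
    ∑ i ∈ s, invOrd (g i) ≤ 1 + ∑ j ∈ Icc 1 m, (p : ℝ) / p ^ j := by
  obtain ⟨g', s', h', hred, hle⟩ := h.exists_mergeReduced invOrd
  rw [← div_self (Nat.cast_ne_zero.2 hp.out.ne_zero)]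
  refine hle.trans <| sum_invOrd_le_of_card_level_le_two_mul hm
    (fun i _ ↦ pow_nsmul_eq_zero hm (g' i)) h'.ne_zero ?_ fun j hj ↦ ?_
  · exact (h'.mono (filter_subset _ _)).card_le_of_nsmul_eq_zero hm hp2 fun i hi ↦
      addOrderOf_dvd_iff_nsmul_eq_zero.1 (mem_filter.1 hi).2.dvd
  · obtain ⟨k, rfl⟩ := Nat.exists_eq_add_of_le' hj
    exact (h'.mono (filter_subset _ _)).card_le_of_mergeReduced (fstTorsion p m)
      (hred.mono (filter_subset _ _)) hp.out.one_lt (pow_pos hp.out.pos (k + 1)) card_fstTorsion_le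
      (fun i hi ↦ by rw [(mem_filter.1 hi).2, ← pow_succ'])
      fun i hi ↦ pow_nsmul_mem_fstTorsion (mem_filter.1 hi).2

theorem ZeroSumFreeOn.sum_invOrd_le_of_prime_power (h : ZeroSumFreeOn g s) (hm : 1 ≤ m) :
    ∑ i ∈ s, invOrd (g i) ≤ 1 - 1 / (p : ℝ) + (1 - 1 / (p : ℝ) ^ m) := by
  classical
  have hp1 : (1 : ℝ) < p := Nat.one_lt_cast.2 hp.out.one_lt
  obtain ⟨g', s', h', hred, hle⟩ := h.exists_mergeReduced invOrd
  calc ∑ i ∈ s, invOrd (g i)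
      ≤ ((p - 1 : ℕ) : ℝ) / p + ∑ j ∈ Icc 1 m, ((p - 1 : ℕ) : ℝ) / p ^ j := ?_
    _ = 1 - 1 / (p : ℝ) + (1 - 1 / (p : ℝ) ^ m) := by
      rw [sum_Icc_div_pow _ _ (by positivity) hp1.ne', Nat.cast_pred hp.out.pos,
        div_self (sub_ne_zero.2 hp1.ne'), one_mul, sub_div, div_self (by positivity)]
  refine hle.trans <| sum_invOrd_le_of_card_level_le_two_mul hm
    (fun i _ ↦ pow_nsmul_eq_zero hm (g' i)) h'.ne_zero ?_ fun j hj ↦ ?_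
  · exact (h'.mono (filter_subset _ _)).card_le_of_nsmul_eq_zero hm fun i hi ↦
      addOrderOf_dvd_iff_nsmul_eq_zero.1 (mem_filter.1 hi).2.dvd
  · obtain ⟨k, rfl⟩ := Nat.exists_eq_add_of_le' hj
    suffices #{i ∈ s' | addOrderOf (g' i) = p ^ (k + 2)} < p from Nat.le_pred_of_lt this
    exact (h'.mono (filter_subset _ _)).card_lt_of_mergeReduced (fstTorsion p m)
      (hred.mono (filter_subset _ _)) hp.out.one_lt (pow_pos hp.out.pos (k + 1)) card_fstTorsion_le
      (fun i hi ↦ by rw [(mem_filter.1 hi).2, ← pow_succ'])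
      fun i hi ↦ pow_nsmul_mem_fstTorsion (mem_filter.1 hi).2

end SylowBound

section CyclicProd

variable {ι H : Type*} [AddCommGroup H] {r : ℕ}

theorem card_ker_snd (H : Type*) [AddCommGroup H] (r : ℕ) :
    Nat.card (AddMonoidHom.snd (ZMod r) H).ker = r := by
  rw [AddMonoidHom.ker_snd, Nat.card_congr (AddSubgroup.prodEquiv _ _).toEquiv]
  simp

instance [NeZero r] : Finite (AddMonoidHom.snd (ZMod r) H).ker :=
  Nat.finite_of_card_ne_zero (by rw [card_ker_snd]; exact NeZero.ne r)

theorem coe_ker_snd_subset_subsetSums {g : ι → ZMod r × H} {J : Finset ι}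
    (hr3 : r = 2 ∨ r = 3) (hJ : J.Nonempty) (hg : ∀ i ∈ J, g i ≠ 0) (hJ2 : ∀ i ∈ J, (g i).2 = 0)
    (hJ0 : ∑ i ∈ J, g i = 0) :
    ((AddMonoidHom.snd (ZMod r) H).ker : Set (ZMod r × H)) ⊆ subsetSums g J := by
  classical
  intro x hx
  have hx2 : x.2 = 0 := hx
  obtain ⟨k, hk⟩ := hJ
  have hcases : ∀ r, r = 2 ∨ r = 3 → ∀ a b : ZMod r, a ≠ 0 → b = 0 ∨ b = a ∨ b = -a := by
    rintro r (rfl | rfl) <;> decide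
  have hk1 : (g k).1 ≠ 0 := fun hk1 ↦ hg k hk (Prod.ext hk1 (hJ2 k hk))
  rcases hcases r hr3 _ x.1 hk1 with hx0 | hxk | hxk
  · exact ⟨∅, empty_subset _, (Prod.ext hx0 hx2).symm⟩
  · exact ⟨{k}, singleton_subset_iff.2 hk,
      (sum_singleton g k).trans (Prod.ext hxk.symm ((hJ2 k hk).trans hx2.symm))⟩
  · refine ⟨J.erase k, erase_subset _ _,
      (eq_neg_of_add_eq_zero_right ((add_sum_erase J g hk).trans hJ0)).trans
        (Prod.ext hxk.symm ?_)⟩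
    rw [Prod.snd_neg, hJ2 k hk, neg_zero, hx2]

theorem addOrderOf_eq_mul_addOrderOf_snd [hr : Fact r.Prime] {x : ZMod r × H} (hx : x.1 ≠ 0)
    (hcop : r.Coprime (addOrderOf x.2)) : addOrderOf x = r * addOrderOf x.2 := by
  rw [Prod.addOrderOf, addOrderOf_eq_prime (p := r) (by simp) hx, hcop.lcm_eq_mul]

variable [hr : Fact r.Prime] {g : ι → ZMod r × H} {s : Finset ι}

theorem sum_invOrd_eq_card_div (hg : ∀ i ∈ s, g i ≠ 0) (hs : ∀ i ∈ s, (g i).2 = 0) :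
    ∑ i ∈ s, invOrd (g i) = s.card / (r : ℝ) := by
  rw [sum_congr rfl (g := fun _ ↦ 1 / (r : ℝ)), sum_const, nsmul_eq_mul, mul_one_div]
  intro i hi
  rw [invOrd, addOrderOf_eq_prime (p := r) (Prod.ext (by simp) (by simp [hs i hi])) (hg i hi)]

theorem ZeroSumFreeOn.map_snd_of_fst_eq_zero (h : ZeroSumFreeOn g s) (hs : ∀ i ∈ s, (g i).1 = 0) :
    ZeroSumFreeOn (fun i ↦ (g i).2) s :=
  h.hom (f := AddMonoidHom.snd _ _) fun A hA h0 ↦ Prod.ext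
    (by rw [Prod.fst_sum]; exact sum_eq_zero fun i hi ↦ hs i (hA hi))
    (by rw [Prod.snd_sum]; exact h0)

end CyclicProd

section FullGroup

variable {ι : Type*} {r p m : ℕ} [hr : Fact r.Prime] [hp : Fact p.Prime]
  {g : ι → ZMod r × ZMod (p ^ m) × ZMod p} {s : Finset ι}

theorem ZeroSumFreeOn.sum_invOrd_mixed_le (h : ZeroSumFreeOn g s)
    (hred : MergeReduced invOrd g s) (hm : 1 ≤ m) (hrp : r < p)
    (hfst : ∀ i ∈ s, (g i).1 ≠ 0) (hsnd : ∀ i ∈ s, (g i).2 ≠ 0) :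
    ∑ i ∈ s, invOrd (g i) ≤ 1 / (r : ℝ) := by
  classical
  have hp1 : (1 : ℝ) < p := Nat.one_lt_cast.2 hp.out.one_lt
  have hcop (j : ℕ) : r.Coprime (p ^ j) :=
    ((Nat.coprime_primes hr.out hp.out).2 hrp.ne).pow_right j
  have hlevel (j : ℕ) : #{i ∈ s | addOrderOf (g i).2 = p ^ j} ≤ p - 1 := by
    have hlt := (h.mono (filter_subset _ _)).card_lt_of_mergeReduced
      (AddMonoidHom.snd (ZMod r) (ZMod (p ^ m) × ZMod p)).ker (hred.mono (filter_subset _ _))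
      hr.out.one_lt (pow_pos hp.out.pos j) (card_ker_snd _ _).le
      (s := {i ∈ s | addOrderOf (g i).2 = p ^ j}) (fun i hi ↦ ?_) fun i hi ↦ ?_
    · lia
    · obtain ⟨his, hij⟩ := mem_filter.1 hi
      rw [addOrderOf_eq_mul_addOrderOf_snd (hfst i his) (hij ▸ hcop j), hij]
    · exact addOrderOf_dvd_iff_nsmul_eq_zero.1 (mem_filter.1 hi).2.dvd
  calc ∑ i ∈ s, invOrd (g i) = 1 / (r : ℝ) * ∑ i ∈ s, invOrd (g i).2 := by
        rw [mul_sum]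
        refine sum_congr rfl fun i hi ↦ ?_
        obtain ⟨j, -, hj⟩ := (Nat.dvd_prime_pow hp.out).1
          (addOrderOf_dvd_of_nsmul_eq_zero (pow_nsmul_eq_zero hm (g i).2))
        rw [invOrd, invOrd, addOrderOf_eq_mul_addOrderOf_snd (hfst i hi) (hj ▸ hcop j),
          Nat.cast_mul, one_div_mul_one_div]
    _ ≤ 1 / (r : ℝ) * ∑ j ∈ Icc 1 m, ((p - 1 : ℕ) : ℝ) / p ^ j := by
        gcongr
        exact sum_invOrd_le_of_card_level_le (fun i _ ↦ pow_nsmul_eq_zero hm (g i).2) hsnd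
          fun j _ ↦ hlevel j
    _ = 1 / (r : ℝ) * (1 - 1 / (p : ℝ) ^ m) := by
        rw [sum_Icc_div_pow _ _ (by positivity) hp1.ne', Nat.cast_pred hp.out.pos,
          div_self (sub_ne_zero.2 hp1.ne'), one_mul]
    _ ≤ 1 / (r : ℝ) := mul_le_of_le_one_right (by positivity) (sub_le_self _ (by positivity))

theorem ZeroSumFreeOn.sum_invOrd_le_of_card_add_one_eq (h : ZeroSumFreeOn g s) (hm : 1 ≤ m)
    (hcard : #{i ∈ s | (g i).2 = 0} + 1 = r) :
    ∑ i ∈ s with (g i).2 ≠ 0, invOrd (g i) ≤ 1 - 1 / (p : ℝ) + (1 - 1 / (p : ℝ) ^ m) := by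
  classical
  let f := AddMonoidHom.snd (ZMod r) (ZMod (p ^ m) × ZMod p)
  have hpure : ∀ i ∈ {i ∈ s | (g i).2 = 0}, (g i).2 = 0 := fun i hi ↦ (mem_filter.1 hi).2
  have hfill := (h.mono (filter_subset (fun i ↦ (g i).2 = 0) s)).subsetSums_eq f.ker hpure
    (hcard.trans (card_ker_snd _ _).symm)
  calc ∑ i ∈ s with (g i).2 ≠ 0, invOrd (g i) ≤ ∑ i ∈ s with (g i).2 ≠ 0, invOrd (f (g i)) :=
        sum_le_sum fun i _ ↦ invOrd_le_invOrd_map f (g i)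
    _ ≤ 1 - 1 / (p : ℝ) + (1 - 1 / (p : ℝ) ^ m) := by
        rw [filter_not]
        exact (h.hom_sdiff (filter_subset (fun i ↦ (g i).2 = 0) s) hfill.ge)
          |>.sum_invOrd_le_of_prime_power hm

theorem ZeroSumFreeOn.sum_invOrd_snd_ne_zero_le (h : ZeroSumFreeOn g s)
    (hred : MergeReduced invOrd g s) (hm : 1 ≤ m) (hrp : r < p) :
    ∑ i ∈ s with (g i).2 ≠ 0, invOrd (g i) ≤
      1 / (r : ℝ) + (1 - 1 / (p : ℝ) + (1 - 1 / (p : ℝ) ^ m)) := by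
  rw [← sum_filter_not_add_sum_filter _ fun i ↦ (g i).1 = 0, filter_filter, filter_filter]
  gcongr ?_ + ?_
  · exact (h.mono (filter_subset _ _)).sum_invOrd_mixed_le (hred.mono (filter_subset _ _)) hm hrp
      (fun i hi ↦ (mem_filter.1 hi).2.2) fun i hi ↦ (mem_filter.1 hi).2.1
  · refine (sum_le_sum fun i _ ↦ invOrd_le_invOrd_map (AddMonoidHom.snd _ _) (g i)).trans ?_
    exact ((h.mono (filter_subset _ _)).map_snd_of_fst_eq_zero fun i hi ↦
      (mem_filter.1 hi).2.2).sum_invOrd_le_of_prime_power hm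

theorem ZeroSumFreeOn.sum_invOrd_le (h : ZeroSumFreeOn g s) (hm : 1 ≤ m) (hrp : r < p) :
    ∑ i ∈ s, invOrd (g i) ≤ 1 - 1 / (r : ℝ) + (1 - 1 / (p : ℝ) + (1 - 1 / (p : ℝ) ^ m)) := by
  classical
  have hr0 : (0 : ℝ) < r := Nat.cast_pos.2 hr.out.pos
  obtain ⟨g', s', h', hred, hle⟩ := h.exists_mergeReduced invOrd
  refine hle.trans ?_
  have hpure := h'.mono (filter_subset (fun i ↦ (g' i).2 = 0) s')
  have hpure0 : ∀ i ∈ {i ∈ s' | (g' i).2 = 0}, (g' i).2 = 0 := fun i hi ↦ (mem_filter.1 hi).2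
  have hlt := hpure.card_lt (AddMonoidHom.snd (ZMod r) (ZMod (p ^ m) × ZMod p)).ker hpure0
  rw [card_ker_snd] at hlt
  rw [← sum_filter_add_sum_filter_not s' fun i ↦ (g' i).2 = 0,
    sum_invOrd_eq_card_div hpure.ne_zero hpure0]
  rcases (Nat.succ_le_of_lt hlt).eq_or_lt with heq | hlt'
  · have hcast : (#{i ∈ s' | (g' i).2 = 0} : ℝ) = r - 1 := eq_sub_of_add_eq (mod_cast heq)
    rw [hcast, sub_div, div_self hr0.ne']
    gcongr
    exact h'.sum_invOrd_le_of_card_add_one_eq hm heq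
  · have hcast : (#{i ∈ s' | (g' i).2 = 0} : ℝ) + 1 + 1 ≤ r := mod_cast hlt'
    calc _ ≤ (r - 1 - 1) / (r : ℝ) + (1 / r + (1 - 1 / (p : ℝ) + (1 - 1 / (p : ℝ) ^ m))) := by
          gcongr
          · linarith
          · exact h'.sum_invOrd_snd_ne_zero_le hred hm hrp
      _ = _ := by
          field_simp
          ring

theorem UniqueFactorOn.sum_invOrd_le_of_pure_block [DecidableEq ι] {J : Finset ι}
    (h : UniqueFactorOn g s) (hm : 1 ≤ m) (hr3 : r = 2 ∨ r = 3) (hp2 : p ≠ 2) (hJs : J ⊆ s)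
    (hJ : J.Nonempty) (hJ2 : ∀ i ∈ J, (g i).2 = 0) (hJ0 : ∑ i ∈ J, g i = 0) :
    ∑ i ∈ s, invOrd (g i) ≤ 2 + ∑ j ∈ Icc 1 m, (p : ℝ) / p ^ j := by
  let f := AddMonoidHom.snd (ZMod r) (ZMod (p ^ m) × ZMod p)
  have hgJ := (h.mono hJs).ne_zero
  have hcard := (h.mono hJs).card_le f.ker hJ2
  rw [card_ker_snd] at hcard
  have hfill := coe_ker_snd_subset_subsetSums hr3 hJ hgJ hJ2 hJ0
  calc ∑ i ∈ s, invOrd (g i) = ∑ i ∈ J, invOrd (g i) + ∑ i ∈ s \ J, invOrd (g i) := by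
        rw [← Finset.sum_sdiff hJs, add_comm]
    _ ≤ 1 + ∑ i ∈ s \ J, invOrd (f (g i)) := by
        gcongr with i
        · rw [sum_invOrd_eq_card_div hgJ hJ2]
          exact div_le_one_of_le₀ (Nat.cast_le.2 hcard) (Nat.cast_nonneg r)
        · exact invOrd_le_invOrd_map f (g i)
    _ ≤ 1 + (1 + ∑ j ∈ Icc 1 m, (p : ℝ) / p ^ j) := by
        gcongr
        exact (h.hom_sdiff hJs hJ0 hfill).sum_invOrd_le_of_prime_power hm hp2
    _ = 2 + ∑ j ∈ Icc 1 m, (p : ℝ) / p ^ j := by ring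

end FullGroup

section Factorization

theorem exists_finpartition_extension {ι G : Type*} [DecidableEq ι] [AddCommGroup G] {g : ι → G}
    {s A : Finset ι} (hA : A ⊆ s) (hs : ∑ i ∈ s, g i = 0) (hA0 : ∑ i ∈ A, g i = 0)
    (Q : Finpartition A) (hQ : ∀ I ∈ Q.parts, MinZeroSumOn g I) :
    ∃ P : Finpartition s, Q.parts ⊆ P.parts ∧ ∀ I ∈ P.parts, MinZeroSumOn g I := by
  induction hn : #(s \ A) using Nat.strong_induction_on generalizing A with
  | h n ih =>
    rcases hA.eq_or_ssubset with rfl | hAs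
    · exact ⟨Q, Subset.rfl, hQ⟩
    obtain ⟨J, hJ, hmin⟩ := exists_minZeroSumOn (sdiff_nonempty.2 hAs.not_subset)
      (sum_sdiff_eq_zero hA hs hA0)
    have hdisj : Disjoint A J := disjoint_sdiff.mono_right hJ
    have hJs := hJ.trans sdiff_subset
    have hlt : #(s \ (A ∪ J)) < n := by
      rw [← hn, ← sup_eq_union, ← sdiff_sdiff_left]
      exact card_lt_card (sdiff_ssubset hJ hmin.1)
    obtain ⟨P, hP, hPmin⟩ := ih _ hlt (union_subset hA hJs)
      (by rw [sum_union hdisj, hA0, hmin.2.1, add_zero])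
      (Q.extend hmin.1.ne_empty hdisj rfl) (by simpa [Finpartition.extend, hmin] using hQ) rfl
    exact ⟨P, (subset_insert _ _).trans hP, hPmin⟩

variable {G : Type*} [AddCommGroup G] {ℓ : ℕ} {g : Fin ℓ → G}

theorem IsFactorization.sum_eq_zero_of_subset_or_disjoint {P : Finpartition (univ : Finset (Fin ℓ))}
    (hP : IsFactorization g P) {A : Finset (Fin ℓ)} (hA : ∀ I ∈ P.parts, I ⊆ A ∨ Disjoint I A) :
    ∑ i ∈ A, g i = 0 := by
  rw [← univ_inter A, ← P.biUnion_parts, biUnion_inter, sum_biUnion]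
  · refine Finset.sum_eq_zero fun I hI ↦ ?_
    rcases hA I hI with hIA | hIA
    · rw [id, inter_eq_left.2 hIA, (hP I hI).2.1]
    · rw [id, disjoint_iff_inter_eq_empty.1 hIA, sum_empty]
  · exact fun I hI J hJ hne ↦ (P.disjoint hI hJ hne).mono inter_subset_left inter_subset_left

theorem IsFactorization.subset_or_disjoint {P : Finpartition (univ : Finset (Fin ℓ))}
    (hP : IsFactorization g P) (huniq : ∀ R, IsFactorization g R → R = P) {A : Finset (Fin ℓ)}
    (hA : ∑ i ∈ A, g i = 0) : ∀ I ∈ P.parts, I ⊆ A ∨ Disjoint I A := by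
  have h0 : ∑ i, g i = 0 := hP.sum_eq_zero_of_subset_or_disjoint fun I _ ↦ Or.inl (subset_univ I)
  obtain ⟨Q, -, hQ⟩ := exists_finpartition_extension (empty_subset A) hA sum_empty
    (Finpartition.empty _) (by simp)
  obtain ⟨R, hQR, hR⟩ := exists_finpartition_extension (subset_univ A) h0 hA Q hQ
  obtain rfl := huniq R hR
  intro I hI
  refine or_iff_not_imp_right.2 fun hIA ↦ ?_
  obtain ⟨x, hxI, hxA⟩ := not_disjoint_iff.1 hIA
  obtain ⟨J, hJ, hxJ⟩ := Q.exists_mem hxA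
  exact R.disjoint.elim_finset hI (hQR hJ) x hxI hxJ ▸ Q.le hJ

theorem isUFIM_iff : IsUFIM g ↔ UniqueFactorOn g univ ∧ ∑ i, g i = 0 := by
  constructor
  · rintro ⟨hg, P, hP, huniq⟩
    refine ⟨⟨fun i _ ↦ hg i, fun A _ B _ hA hB ↦ ?_⟩,
      hP.sum_eq_zero_of_subset_or_disjoint fun I _ ↦ Or.inl (subset_univ I)⟩
    refine hP.sum_eq_zero_of_subset_or_disjoint fun I hI ↦ ?_
    rcases hP.subset_or_disjoint huniq hA I hI with hIA | hIA
    · exact (hP.subset_or_disjoint huniq hB I hI).imp (subset_inter hIA)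
        (·.mono_right inter_subset_right)
    · exact Or.inr (hIA.mono_right inter_subset_left)
  · rintro ⟨h, h0⟩
    obtain ⟨P, -, hP⟩ := exists_finpartition_extension (empty_subset univ) h0 sum_empty
      (Finpartition.empty _) (by simp)
    have hsub (Q R) (hQ : IsFactorization g Q) (hR : IsFactorization g R) :
        Q.parts ⊆ R.parts := by
      intro I hI
      obtain ⟨x, hx⟩ := (hQ I hI).1
      obtain ⟨J, hJ, hxJ⟩ := R.exists_mem (mem_univ x)
      have hinter := h.sum_inter I (subset_univ I) J (subset_univ J) (hQ I hI).2.1 (hR J hJ).2.1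
      have hne : I ∩ J ≠ ∅ := ne_empty_of_mem (mem_inter.2 ⟨hx, hxJ⟩)
      have hI' := (MinZeroSumOn.eq_empty_or_eq (hQ I hI) inter_subset_left hinter).resolve_left hne
      have hJ' := (MinZeroSumOn.eq_empty_or_eq (hR J hJ) inter_subset_right hinter).resolve_left hne
      rwa [← hI', hJ']
    exact ⟨fun i ↦ h.ne_zero i (mem_univ i), P, hP, fun R hR ↦
      Finpartition.ext ((hsub R P hR hP).antisymm (hsub P R hP hR))⟩

end Factorization

section LowerBound

/-- The cross numbers of all UFIMs over `G ∖ {0}`, so that `K1 G` is their supremum. -/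
def ufimCrossNums (G : Type*) [AddCommGroup G] : Set ℝ :=
  {x | ∃ (ℓ : ℕ) (g : Fin ℓ → G), IsUFIM g ∧ crossNum g = x}

variable {ι κ G H : Type*} [Fintype ι] [Fintype κ] [DecidableEq ι] [DecidableEq κ]
  [AddCommGroup G] [AddCommGroup H]

theorem UniqueFactorOn.sum_invOrd_mem_ufimCrossNums {g : ι → G} (h : UniqueFactorOn g univ)
    (h0 : ∑ i, g i = 0) : ∑ i, invOrd (g i) ∈ ufimCrossNums G := by
  let e := (Fintype.equivFin ι).symm
  refine ⟨_, g ∘ e, isUFIM_iff.2 ⟨h.comp_equiv e, ?_⟩, e.sum_comp fun i ↦ invOrd (g i)⟩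
  exact (e.sum_comp g).trans h0

theorem zero_mem_ufimCrossNums (G : Type*) [AddCommGroup G] : 0 ∈ ufimCrossNums G := by
  simpa using ((zeroSumFreeOn_empty _).uniqueFactorOn.sum_invOrd_mem_ufimCrossNums
    (g := (Fin.elim0 : Fin 0 → G)) (by simp))

theorem UniqueFactorOn.sumElim {g : ι → H} {b : κ → G} {f : H →+ G} (h : UniqueFactorOn g univ)
    (hf : Function.Injective f) (hb : ∀ k, b k ≠ 0) (hb0 : ∑ k, b k = 0)
    (hrange : ∀ B : Finset κ, ∑ k ∈ B, b k ∈ f.range → B = ∅ ∨ B = univ) :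
    UniqueFactorOn (Sum.elim (f ∘ g) b) univ := by
  have hsum (A : Finset (ι ⊕ κ)) : ∑ x ∈ A, Sum.elim (f ∘ g) b x =
      f (∑ i ∈ A.toLeft, g i) + ∑ k ∈ A.toRight, b k := by
    conv_lhs => rw [← A.toLeft_disjSum_toRight, sum_disjSum]
    simp
  have hright {B : Finset κ} (hB : B = ∅ ∨ B = univ) : ∑ k ∈ B, b k = 0 := by
    rcases hB with rfl | rfl
    exacts [sum_empty, hb0]
  have hzero (A : Finset (ι ⊕ κ)) : ∑ x ∈ A, Sum.elim (f ∘ g) b x = 0 ↔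
      ∑ i ∈ A.toLeft, g i = 0 ∧ (A.toRight = ∅ ∨ A.toRight = univ) := by
    rw [hsum]
    refine ⟨fun hA ↦ ?_, fun hA ↦ by rw [hA.1, hright hA.2, map_zero, add_zero]⟩
    have hAr := hrange A.toRight ⟨-∑ i ∈ A.toLeft, g i, by
      rw [map_neg, neg_eq_of_add_eq_zero_right hA]⟩
    rw [hright hAr, add_zero, map_eq_zero_iff f hf] at hA
    exact ⟨hA, hAr⟩
  refine ⟨?_, fun A _ B _ hA hB ↦ ?_⟩
  · rintro (i | k) -
    exacts [(map_ne_zero_iff f hf).2 (h.ne_zero i (mem_univ i)), hb k]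
  · rw [hzero] at hA hB ⊢
    rw [toLeft_inter, toRight_inter]
    refine ⟨h.sum_inter _ (subset_univ _) _ (subset_univ _) hA.1 hB.1, ?_⟩
    rcases hA.2 with hA' | hA' <;> simp [hA', hB.2]

theorem add_div_pow_mem_ufimCrossNums {f : H →+ G} (hf : Function.Injective f) {n : ℕ}
    (hn : 1 < n) {π : G →+ ZMod n} (hker : f.range = π.ker) {a : G} (ha : π a = 1) {e : ℕ}
    (he : addOrderOf a = n ^ e) {W : ℝ} (hW : W ∈ ufimCrossNums H) :
    W + n / n ^ e ∈ ufimCrossNums G := by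
  have hcop : (addOrderOf a).Coprime (n - 1) := by
    rw [he]
    exact ((Nat.coprime_self_sub_right hn.le).2 n.coprime_one_right).pow_left e
  obtain ⟨ℓ, g, hg, rfl⟩ := hW
  obtain ⟨hg, hg0⟩ := isUFIM_iff.1 hg
  obtain ⟨k, rfl⟩ : ∃ k, n = k + 1 := ⟨n - 1, by lia⟩
  rw [Nat.add_sub_cancel] at hcop
  have : Fact (1 < k + 1) := ⟨hn⟩
  let b : Option (Fin k) → G := fun o ↦ o.elim (-(k • a)) fun _ ↦ a
  have hord (o) : addOrderOf (b o) = addOrderOf a := by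
    cases o
    exacts [(addOrderOf_neg _).trans hcop.addOrderOf_nsmul, rfl]
  have hπb (o) : π (b o) = 1 := by
    cases o
    · have : (k : ZMod (k + 1)) + 1 = 0 := mod_cast ZMod.natCast_self (k + 1)
      simp [b, ha, eq_neg_of_add_eq_zero_left this]
    · exact ha
  have hb (o) : b o ≠ 0 := fun h0 ↦ zero_ne_one ((map_zero π).symm.trans (h0 ▸ hπb o))
  have hb0 : ∑ o, b o = 0 := by simp [b, Fintype.sum_option]
  have hrange (B : Finset (Option (Fin k))) (hB : ∑ o ∈ B, b o ∈ f.range) : B = ∅ ∨ B = univ := by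
    rw [hker, AddMonoidHom.mem_ker, map_sum, sum_congr rfl fun o _ ↦ hπb o, sum_const,
      nsmul_one, ZMod.natCast_eq_zero_iff] at hB
    refine B.eq_empty_or_nonempty.imp_right fun hne ↦ ?_
    rw [← card_eq_iff_eq_univ]
    exact (card_le_univ B).antisymm (by simpa using Nat.le_of_dvd hne.card_pos hB)
  convert (hg.sumElim hf hb hb0 hrange).sum_invOrd_mem_ufimCrossNums ?_ using 1
  · simp [invOrd, crossNum, hord, he, addOrderOf_injective f hf, Fintype.card_option,
      div_eq_mul_inv]
  · simp [← map_sum, hg0, hb0]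

theorem add_one_mem_ufimCrossNums_prod_zmod {n : ℕ} (hn : 1 < n) {W : ℝ}
    (hW : W ∈ ufimCrossNums H) : W + 1 ∈ ufimCrossNums (H × ZMod n) := by
  have hrange : (AddMonoidHom.inl H (ZMod n)).range = (AddMonoidHom.snd H (ZMod n)).ker := by
    ext ⟨x, y⟩
    simp [AddMonoidHom.mem_range, AddSubgroup.mem_prod, eq_comm]
  have hadd := add_div_pow_mem_ufimCrossNums (fun x y hxy ↦ congrArg Prod.fst hxy) hn hrange
    (a := (0, 1)) rfl (e := 1) (by simp [Prod.addOrderOf]) hW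
  rwa [pow_one, div_self (by positivity)] at hadd

theorem add_one_mem_ufimCrossNums_zmod_prod {n : ℕ} (hn : 1 < n) {W : ℝ}
    (hW : W ∈ ufimCrossNums H) : W + 1 ∈ ufimCrossNums (ZMod n × H) := by
  have hrange : (AddMonoidHom.inr (ZMod n) H).range = (AddMonoidHom.fst (ZMod n) H).ker := by
    ext ⟨x, y⟩
    simp [AddMonoidHom.mem_range, AddSubgroup.mem_prod, eq_comm]
  have hadd := add_div_pow_mem_ufimCrossNums (fun x y hxy ↦ congrArg Prod.snd hxy) hn hrange
    (a := (1, 0)) rfl (e := 1) (by simp [Prod.addOrderOf]) hW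
  rwa [pow_one, div_self (by positivity)] at hadd

theorem range_zmodHom_eq_ker_castHom {p m : ℕ} [NeZero p]
    (ha : p ^ m • (p : ZMod (p ^ (m + 1))) = 0) :
    (zmodHom (p : ZMod (p ^ (m + 1))) ha).range = AddMonoidHom.ker
      (ZMod.castHom (dvd_pow_self p m.succ_ne_zero) (ZMod p)).toAddMonoidHom := by
  ext x
  constructor
  · rintro ⟨y, rfl⟩
    obtain ⟨k, rfl⟩ := ZMod.natCast_zmod_surjective y
    rw [AddMonoidHom.mem_ker, zmodHom_natCast, map_nsmul]
    simp
  · intro hx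
    obtain ⟨k, rfl⟩ := ZMod.natCast_zmod_surjective x
    obtain ⟨l, rfl⟩ : p ∣ k := (ZMod.natCast_eq_zero_iff k p).1
      ((map_natCast (ZMod.castHom (dvd_pow_self p m.succ_ne_zero) (ZMod p)) k).symm.trans hx)
    exact ⟨l, by rw [zmodHom_natCast, nsmul_eq_mul, Nat.cast_mul, mul_comm]⟩

theorem sum_mem_ufimCrossNums_zmod_pow {p : ℕ} (hp : 1 < p) (m : ℕ) :
    ∑ j ∈ Icc 1 m, (p : ℝ) / p ^ j ∈ ufimCrossNums (ZMod (p ^ m)) := by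
  have : NeZero p := ⟨by lia⟩
  induction m with
  | zero => simpa using zero_mem_ufimCrossNums _
  | succ m ih =>
    have hord : addOrderOf (p : ZMod (p ^ (m + 1))) = p ^ m := by
      rw [ZMod.addOrderOf_coe' _ (NeZero.ne p), pow_succ, Nat.gcd_mul_left_left,
        Nat.mul_div_cancel _ (NeZero.pos p)]
    have ha : p ^ m • (p : ZMod (p ^ (m + 1))) = 0 := hord ▸ addOrderOf_nsmul_eq_zero _
    rw [sum_Icc_succ_top (by lia)]
    exact add_div_pow_mem_ufimCrossNums (zmodHom_injective ha hord) hp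
      (range_zmodHom_eq_ker_castHom ha)
      (map_one (ZMod.castHom (dvd_pow_self p m.succ_ne_zero) (ZMod p))) (ZMod.addOrderOf_one _) ih

theorem two_add_sum_mem_ufimCrossNums {r p : ℕ} (hr : 1 < r) (hp : 1 < p) (m : ℕ) :
    2 + ∑ j ∈ Icc 1 m, (p : ℝ) / p ^ j ∈ ufimCrossNums (ZMod r × ZMod (p ^ m) × ZMod p) := by
  convert add_one_mem_ufimCrossNums_zmod_prod hr
    (add_one_mem_ufimCrossNums_prod_zmod hp (sum_mem_ufimCrossNums_zmod_pow hp m)) using 1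
  ring

end LowerBound

section UpperBound

theorem sum_Icc_div_pow_self {m : ℕ} (hm : 1 ≤ m) {x : ℝ} (hx0 : x ≠ 0) (hx1 : x ≠ 1) :
    ∑ j ∈ Icc 1 m, x / x ^ j = (x ^ m - 1) / (x ^ m - x ^ (m - 1)) := by
  obtain ⟨k, rfl⟩ := Nat.exists_eq_add_of_le' hm
  have := sub_ne_zero.2 hx1
  have hden : x ^ (k + 1) - x ^ k = x ^ k * (x - 1) := by ring
  rw [sum_Icc_div_pow _ _ hx0 hx1, Nat.add_sub_cancel, hden]
  field_simp
  ring

theorem UniqueFactorOn.exists_transversal_card_le_logb {ι G : Type*} [DecidableEq ι]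
    [AddCommGroup G] [Finite G] {g : ι → G} {s : Finset ι} {Q : ι → Prop}
    (h : UniqueFactorOn g s) (h0 : ∑ i ∈ s, g i = 0)
    (hQ : ∀ P ⊆ s, MinZeroSumOn g P → ∃ d ∈ P, Q d) :
    ∃ D ⊆ s, (∀ d ∈ D, Q d) ∧ ZeroSumFreeOn g (s \ D) ∧ (#D : ℝ) ≤ Real.logb 2 (Nat.card G) := by
  obtain ⟨D, hD, hDQ, hfree, C, hC, hDC⟩ := h.exists_transversal h0 hQ
  have hcard := hC.card_le ⊤ fun _ _ ↦ AddSubgroup.mem_top _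
  rw [AddSubgroup.card_top] at hcard
  refine ⟨D, hD, hDQ, hfree, ?_⟩
  rw [Real.le_logb_iff_rpow_le one_lt_two (Nat.cast_pos.2 Nat.card_pos), Real.rpow_natCast]
  exact_mod_cast hDC.trans hcard

variable {ι : Type*} {r p m : ℕ} [hr : Fact r.Prime] [hp : Fact p.Prime]
  {g : ι → ZMod r × ZMod (p ^ m) × ZMod p} {s : Finset ι}

theorem invOrd_le_one_div_of_snd_ne_zero (hm : 1 ≤ m) {x : ZMod r × ZMod (p ^ m) × ZMod p}
    (hx : x.2 ≠ 0) : invOrd x ≤ 1 / (p : ℝ) := by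
  have hdvd : p ∣ addOrderOf x.2 := by
    obtain ⟨j, -, hj⟩ := (Nat.dvd_prime_pow hp.out).1
      (addOrderOf_dvd_of_nsmul_eq_zero (pow_nsmul_eq_zero hm x.2))
    rw [hj]
    refine dvd_pow_self p ?_
    rintro rfl
    exact hx (AddMonoid.addOrderOf_eq_one_iff.1 hj)
  refine (invOrd_le_invOrd_map (AddMonoidHom.snd _ _) x).trans ?_
  exact one_div_le_one_div_of_le (Nat.cast_pos.2 hp.out.pos)
    (Nat.cast_le.2 (Nat.le_of_dvd (addOrderOf_pos x.2) hdvd))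

variable [DecidableEq ι]

theorem UniqueFactorOn.sum_invOrd_le_logb_div (h : UniqueFactorOn g s) (h0 : ∑ i ∈ s, g i = 0)
    (hm : 1 ≤ m) (hrp : r < p) (hblock : ∀ P ⊆ s, MinZeroSumOn g P → ∃ d ∈ P, (g d).2 ≠ 0) :
    ∑ i ∈ s, invOrd (g i) ≤ Real.logb 2 ((r : ℝ) * (p : ℝ) ^ (m + 1)) / p +
      (1 - 1 / (r : ℝ) + (1 - 1 / (p : ℝ) + (1 - 1 / (p : ℝ) ^ m))) := by
  obtain ⟨D, hD, hD2, hfree, hcard⟩ := h.exists_transversal_card_le_logb h0 hblock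
  simp only [Nat.card_prod, Nat.card_zmod, Nat.cast_mul, Nat.cast_pow, ← pow_succ] at hcard
  calc ∑ i ∈ s, invOrd (g i) = ∑ i ∈ D, invOrd (g i) + ∑ i ∈ s \ D, invOrd (g i) := by
        rw [← Finset.sum_sdiff hD, add_comm]
    _ ≤ #D • (1 / (p : ℝ)) +
          (1 - 1 / (r : ℝ) + (1 - 1 / (p : ℝ) + (1 - 1 / (p : ℝ) ^ m))) := by
        gcongr
        · exact sum_le_card_nsmul _ _ _ fun i hi ↦
            invOrd_le_one_div_of_snd_ne_zero hm (hD2 i hi)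
        · exact hfree.sum_invOrd_le hm hrp
    _ ≤ _ := by
        rw [nsmul_eq_mul, mul_one_div]
        gcongr

theorem UniqueFactorOn.sum_invOrd_le (h : UniqueFactorOn g s) (h0 : ∑ i ∈ s, g i = 0)
    (hm : 1 ≤ m) (hr3 : r = 2 ∨ r = 3) (hrp : r < p)
    (hlarge : 1 / (r : ℝ) + ((p : ℝ) ^ m - 1) / ((p : ℝ) ^ (m + 1) - (p : ℝ) ^ m)
        + 1 / (p : ℝ) ≥ Real.logb 2 ((r : ℝ) * (p : ℝ) ^ (m + 1)) / (p : ℝ)) :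
    ∑ i ∈ s, invOrd (g i) ≤ 2 + ∑ j ∈ Icc 1 m, (p : ℝ) / p ^ j := by
  by_cases hJ : ∃ J ⊆ s, MinZeroSumOn g J ∧ ∀ i ∈ J, (g i).2 = 0
  · obtain ⟨J, hJs, hJ, hJ2⟩ := hJ
    exact h.sum_invOrd_le_of_pure_block hm hr3 (by lia) hJs hJ.1 hJ2 hJ.2.1
  push Not at hJ
  refine (h.sum_invOrd_le_logb_div h0 hm hrp hJ).trans ?_
  have hp0 : (p : ℝ) ≠ 0 := Nat.cast_ne_zero.2 hp.out.ne_zero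
  have hp1 : (p : ℝ) - 1 ≠ 0 := sub_ne_zero.2 (Nat.one_lt_cast.2 hp.out.one_lt).ne'
  have hden : (p : ℝ) ^ (m + 1) - p ^ m = p ^ m * (p - 1) := by ring
  have hsum : ∑ j ∈ Icc 1 m, (p : ℝ) / p ^ j =
      ((p : ℝ) ^ m - 1) / ((p : ℝ) ^ (m + 1) - (p : ℝ) ^ m) + 1 - 1 / (p : ℝ) ^ m := by
    rw [sum_Icc_div_pow _ _ hp0 (sub_ne_zero.1 hp1), hden]
    field_simp
    ring
  linarith

end UpperBound

/-- Corollary: let `r ∈ {2,3}`, `m ≥ 1`, and `p` a prime with `p > r`.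
If `1/r + (p^m − 1)/(p^{m+1} − p^m) + 1/p ≥ log₂(r·p^{m+1})/p`, then
`K₁(C_r ⊕ C_{p^m} ⊕ C_p) = K₁*(C_r ⊕ C_{p^m} ⊕ C_p) = 2 + (p^m − 1)/(p^m − p^{m−1})`. -/
theorem K1_r_pm_p (r : ℕ) (hr : r = 2 ∨ r = 3) (m : ℕ) (hm : 1 ≤ m)
    (p : ℕ) (hp : p.Prime) (hrp : r < p)
    (hlarge : 1 / (r : ℝ) + ((p : ℝ) ^ m - 1) / ((p : ℝ) ^ (m + 1) - (p : ℝ) ^ m)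
        + 1 / (p : ℝ) ≥
      Real.logb 2 ((r : ℝ) * (p : ℝ) ^ (m + 1)) / (p : ℝ)) :
    K1 (ZMod r × ZMod (p ^ m) × ZMod p) =
      2 + ((p : ℝ) ^ m - 1) / ((p : ℝ) ^ m - (p : ℝ) ^ (m - 1)) := by
  have hr' : r.Prime := by
    rcases hr with rfl | rfl
    exacts [Nat.prime_two, Nat.prime_three]
  have : Fact r.Prime := ⟨hr'⟩
  have : Fact p.Prime := ⟨hp⟩
  rw [← sum_Icc_div_pow_self hm (Nat.cast_ne_zero.2 hp.ne_zero) (Nat.one_lt_cast.2 hp.one_lt).ne']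
  refine IsGreatest.csSup_eq ⟨two_add_sum_mem_ufimCrossNums hr'.one_lt hp.one_lt m, ?_⟩
  rintro _ ⟨ℓ, g, hg, rfl⟩
  obtain ⟨hg, hg0⟩ := isUFIM_iff.1 hg
  exact hg.sum_invOrd_le hg0 hm hr hrp hlarge
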